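/- For every integer m ≥ 2 and every real p > 1 there exists a constant C = C(p,m) > 0, independent of N, such that for every integer N ≥ 1 and every function f : G → ℂ, the spherical maximal function M f(x) = max_{0 ≤ r ≤ N} |(σ_r * f)(x)| satisfies ‖M f‖_{L^p(G)} ≤ C · ‖f‖_{L^p(G)}. -/

import Mathlib

open Finset

noncomputable section

/-- Hamming weight on `(ℤ/(m+1)ℤ)^N`. -/
def hw {m N : ℕ} (y : Fin N → ZMod (m + 1)) : ℕ :=
  (Finset.univ.filter fun i => y i ≠ 0).card

/-- `L¹`-normalized indicator of the sphere of radius `r` (zero if `r < 0` or `r > N`). -/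
def sigmaC (m N : ℕ) (r : ℤ) : (Fin N → ZMod (m + 1)) → ℂ := fun x =>
  if (hw x : ℤ) = r then
    ((Finset.univ.filter fun y : Fin N → ZMod (m + 1) => (hw y : ℤ) = r).card : ℂ)⁻¹
  else 0

/-- Convolution on `(ℤ/(m+1)ℤ)^N`. -/
def convC {m N : ℕ} (g f : (Fin N → ZMod (m + 1)) → ℂ) : (Fin N → ZMod (m + 1)) → ℂ :=
  fun x => ∑ y, g y * f (x - y)

/-- The full spherical maximal function `M f (x) = max_{0 ≤ r ≤ N} |(σ_r * f)(x)|`. -/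
def sphericalMax (m N : ℕ) (f : (Fin N → ZMod (m + 1)) → ℂ) (x : Fin N → ZMod (m + 1)) : ℝ :=
  (Finset.range (N + 1)).sup' Finset.nonempty_range_add_one fun r =>
    ‖convC (sigmaC m N (r : ℤ)) f x‖


/-! ### Normalized Krawtchouk polynomials through a recursion -/

def kap (q : ℝ) (n : ℕ) : ℕ → ℕ → ℝ
  | 0, _ => 1
  | k + 1, r => (1 - (r : ℝ) / ((n : ℝ) + k + 1)) * kap q n k r +
      ((r : ℝ) / ((n : ℝ) + k + 1)) * q * kap q n k (r - 1)

theorem kap_succ (q : ℝ) (n k r : ℕ) : kap q n (k + 1) r =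
    (1 - (r : ℝ) / ((n : ℝ) + k + 1)) * kap q n k r +
      ((r : ℝ) / ((n : ℝ) + k + 1)) * q * kap q n k (r - 1) := rfl

theorem kap_zero (q : ℝ) (n r : ℕ) : kap q n 0 r = 1 := rfl

theorem kap_diff (q : ℝ) (n k : ℕ) : ∀ r : ℕ, kap q n (k + 1) (r + 1) - kap q n (k + 1) r =
    -(((k : ℝ) + 1) / ((n : ℝ) + k + 1)) * (1 - q) * kap q n k r := by
  induction k with
  | zero =>
    intro r
    simp only [kap_succ, kap_zero]
    push_cast
    have : (n : ℝ) + 0 + 1 ≠ 0 := by positivity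
    field_simp
    ring
  | succ k ih =>
    intro r
    have h1 : (n : ℝ) + k + 1 ≠ 0 := by positivity
    have h2 : (n : ℝ) + k + 1 + 1 ≠ 0 := by positivity
    have e1 := ih r
    have e3 := kap_succ q n k r
    rcases Nat.eq_zero_or_pos r with rfl | hr
    · rw [kap_succ q n (k + 1), kap_succ q n (k + 1)]
      simp only [Nat.zero_add, Nat.cast_zero, Nat.sub_self, zero_div, zero_mul, add_zero,
        sub_zero, one_mul] at *
      have : kap q n (k + 1) 1 = kap q n (k + 1) 0 +
        -(((k : ℝ) + 1) / ((n : ℝ) + k + 1)) * (1 - q) * kap q n k 0 := by linarith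
      rw [this, e3]
      push_cast
      field_simp
      ring
    · obtain ⟨s, rfl⟩ : ∃ s, r = s + 1 := ⟨r - 1, by omega⟩
      have e2 := ih s
      rw [kap_succ q n (k + 1), kap_succ q n (k + 1)]
      simp only [Nat.add_sub_cancel] at *
      have a1 : kap q n (k + 1) (s + 1 + 1) = kap q n (k + 1) (s + 1) +
        -(((k : ℝ) + 1) / ((n : ℝ) + k + 1)) * (1 - q) * kap q n k (s + 1) := by linarith
      have a2 : kap q n (k + 1) s = kap q n (k + 1) (s + 1) -
        -(((k : ℝ) + 1) / ((n : ℝ) + k + 1)) * (1 - q) * kap q n k s := by linarith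
      rw [a1, a2, e3]
      push_cast
      field_simp
      ring

/-- three-term recurrence -/
theorem kap_three (q : ℝ) (n k r : ℕ) (hN : 0 < n + k) :
    (1 - (k : ℝ) / ((n : ℝ) + k) * (1 - q)) * kap q n k r =
     (1 - (r : ℝ) / ((n : ℝ) + k)) * kap q n k (r + 1)
     + ((r : ℝ) / ((n : ℝ) + k)) * (1 + q) * kap q n k r
     + ((r : ℝ) / ((n : ℝ) + k)) * (-q) * kap q n k (r - 1) := by
  cases k with
  | zero =>
    simp only [kap_zero]
    push_cast
    have : (n : ℝ) + 0 ≠ 0 := by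
      have : (0 : ℝ) < n := by exact_mod_cast hN
      positivity
    field_simp
    ring
  | succ k =>
    have e1 := kap_diff q n k r
    have e3 := kap_succ q n k r
    have h1 : (n : ℝ) + k + 1 ≠ 0 := by positivity
    have a1 : kap q n (k + 1) (r + 1) = kap q n (k + 1) r +
        -(((k : ℝ) + 1) / ((n : ℝ) + k + 1)) * (1 - q) * kap q n k r := by linarith
    rcases Nat.eq_zero_or_pos r with rfl | hr
    · simp only [Nat.zero_add, Nat.cast_zero, Nat.sub_self, zero_div, zero_mul, add_zero,
        sub_zero, one_mul] at *
      rw [a1, e3]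
      push_cast
      field_simp
      ring
    · obtain ⟨s, rfl⟩ : ∃ s, r = s + 1 := ⟨r - 1, by omega⟩
      have e2 := kap_diff q n k s
      simp only [Nat.add_sub_cancel] at *
      have a2 : kap q n (k + 1) s = kap q n (k + 1) (s + 1) -
        -(((k : ℝ) + 1) / ((n : ℝ) + k + 1)) * (1 - q) * kap q n k s := by linarith
      rw [a1, a2, e3]
      push_cast
      field_simp
      ring

theorem kap_nonneg (q : ℝ) (hq : 0 ≤ q) (n k : ℕ) : ∀ r, r ≤ n + k → 0 ≤ kap q n k r := by
  induction k with
  | zero => intro r _; simp [kap_zero]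
  | succ k ih =>
    intro r hr
    rw [kap_succ]
    have hr' : (r : ℝ) ≤ n + k + 1 := by exact_mod_cast hr
    have h2 : 0 ≤ 1 - (r : ℝ) / ((n : ℝ) + k + 1) := by
      rw [sub_nonneg, div_le_one (by positivity)]; exact hr'
    have h3 := ih (r - 1) (by omega)
    have h4 : 0 ≤ ((r : ℝ) / ((n : ℝ) + k + 1)) * q * kap q n k (r - 1) := by positivity
    rcases Nat.lt_or_ge r (n + k + 1) with h | h
    · have := ih r (by omega)
      positivity
    · have : r = n + k + 1 := by omega
      have h5 : 1 - (r : ℝ) / ((n : ℝ) + k + 1) = 0 := by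
        rw [this]; push_cast; rw [div_self (by positivity)]; ring
      rw [h5]; linarith

theorem kap_abs (q : ℝ) (n k : ℕ) : ∀ r, r ≤ n + k → |kap q n k r| ≤ kap |q| n k r := by
  induction k with
  | zero => intro r _; simp [kap_zero]
  | succ k ih =>
    intro r hr
    rw [kap_succ, kap_succ]
    have hr' : (r : ℝ) ≤ n + k + 1 := by exact_mod_cast hr
    have h2 : 0 ≤ 1 - (r : ℝ) / ((n : ℝ) + k + 1) := by
      rw [sub_nonneg, div_le_one (by positivity)]; exact hr'
    have h3 := ih (r - 1) (by omega)
    refine (abs_add_le _ _).trans (add_le_add ?_ ?_)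
    · rcases Nat.lt_or_ge r (n + k + 1) with h | h
      · have := ih r (by omega)
        rw [abs_mul, abs_of_nonneg h2]
        gcongr
      · have : r = n + k + 1 := by omega
        have h5 : 1 - (r : ℝ) / ((n : ℝ) + k + 1) = 0 := by
          rw [this]; push_cast; rw [div_self (by positivity)]; ring
        rw [h5]; simp
    · rw [abs_mul, abs_mul, abs_of_nonneg (by positivity : 0 ≤ (r : ℝ) / ((n : ℝ) + k + 1))]
      gcongr

theorem kap_qmono (q : ℝ) (hq : 0 ≤ q) (hq1 : q ≤ 1) (n k : ℕ) : ∀ r, r + 1 ≤ n + k →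
    q * kap q n k r ≤ kap q n k (r + 1) := by
  induction k with
  | zero => intro r _; simpa [kap_zero] using hq1
  | succ k ih =>
    intro r hr
    have hr' : (r : ℝ) + 1 ≤ n + k + 1 := by exact_mod_cast hr
    have h2 : 0 ≤ 1 - ((r : ℝ) + 1) / ((n : ℝ) + k + 1) := by
      rw [sub_nonneg, div_le_one (by positivity)]; exact hr'
    have h1 : (n : ℝ) + k + 1 ≠ 0 := by positivity
    have A : 0 ≤ (1 - ((r : ℝ) + 1) / ((n : ℝ) + k + 1)) * (kap q n k (r + 1) - q * kap q n k r) := by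
      rcases Nat.lt_or_ge (r + 1) (n + k + 1) with h | h
      · have := ih r (by omega)
        exact mul_nonneg h2 (by linarith)
      · have h6 : (r : ℝ) + 1 = n + k + 1 := by
          have : r + 1 = n + k + 1 := by omega
          exact_mod_cast this
        have h5 : 1 - ((r : ℝ) + 1) / ((n : ℝ) + k + 1) = 0 := by
          rw [h6, div_self h1]; ring
        rw [h5]; simp
    have B : 0 ≤ q * ((r : ℝ) / ((n : ℝ) + k + 1)) * (kap q n k r - q * kap q n k (r - 1)) := by
      rcases Nat.eq_zero_or_pos r with rfl | h
      · simp
      · have := ih (r - 1) (by omega)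
        rw [Nat.sub_add_cancel h] at this
        exact mul_nonneg (by positivity) (by linarith)
    have key : kap q n (k + 1) (r + 1) - q * kap q n (k + 1) r =
      (1 - ((r : ℝ) + 1) / ((n : ℝ) + k + 1)) * (kap q n k (r + 1) - q * kap q n k r) +
      q * ((r : ℝ) / ((n : ℝ) + k + 1)) * (kap q n k r - q * kap q n k (r - 1)) := by
      rw [kap_succ, kap_succ, Nat.add_sub_cancel]
      push_cast
      field_simp
      ring
    linarith

theorem kap_anti (q : ℝ) (hq : 0 ≤ q) (hq1 : q ≤ 1) (n k r : ℕ) (hr : r ≤ n + k) :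
    kap q n (k + 1) r ≤ kap q n k r := by
  rw [kap_succ]
  rcases Nat.eq_zero_or_pos r with rfl | h
  · simp
  · have := kap_qmono q hq hq1 n k (r - 1) (by omega)
    rw [Nat.sub_add_cancel h] at this
    have h2 : 0 ≤ (r : ℝ) / ((n : ℝ) + k + 1) := by positivity
    nlinarith

theorem kap_exp (q : ℝ) (hq : 0 ≤ q) (hq1 : q ≤ 1) (n k : ℕ) : ∀ r, r ≤ n + k →
    kap q n k r ≤ Real.exp (-((1 - q) * ((k : ℝ) / ((n : ℝ) + k)) * r)) := by
  cases k with
  | zero => intro r _; simp [kap_zero]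
  | succ k =>
    intro r
    induction r with
    | zero =>
      intro _
      have : ∀ k, kap q n k 0 = 1 := by
        intro k
        induction k with
        | zero => rfl
        | succ k ih => rw [kap_succ]; simp [ih]
      simp [this]
    | succ r ih =>
      intro hr
      have h0 := ih (by omega)
      have h1 := kap_diff q n k r
      have h2 := kap_anti q hq hq1 n k r (by omega)
      have h3 := kap_nonneg q hq n (k + 1) r (by omega)
      set c : ℝ := (1 - q) * (((k + 1 : ℕ) : ℝ) / ((n : ℝ) + ((k + 1 : ℕ) : ℝ))) with hc
      have hc' : c = ((k : ℝ) + 1) / ((n : ℝ) + k + 1) * (1 - q) := by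
        rw [hc]; push_cast; ring_nf
      have hc0 : 0 ≤ c := by
        rw [hc]; exact mul_nonneg (by linarith) (by positivity)
      have h4 : kap q n (k + 1) (r + 1) ≤ (1 - c) * kap q n (k + 1) r := by
        have : c * kap q n (k + 1) r ≤ c * kap q n k r := by gcongr
        have e : kap q n (k + 1) (r + 1) - kap q n (k + 1) r = - c * kap q n k r := by
          rw [h1, hc']; ring
        linarith
      have h5 : 1 - c ≤ Real.exp (-c) := by
        have := Real.add_one_le_exp (-c); linarith
      calc kap q n (k + 1) (r + 1) ≤ (1 - c) * kap q n (k + 1) r := h4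
        _ ≤ Real.exp (-c) * kap q n (k + 1) r := by gcongr
        _ ≤ Real.exp (-c) * Real.exp (-(c * r)) := by gcongr
        _ = _ := by rw [← Real.exp_add]; congr 1; push_cast; ring

/-! ### Finite differences -/

def dl {E : Type*} [AddCommGroup E] (u : ℕ → E) : ℕ → E := fun r => u (r + 1) - u r

theorem dl_smul (c : ℝ) (u : ℕ → ℝ) (M : ℕ) : ∀ r, dl^[M] (fun s => c * u s) r = c * dl^[M] u r := by
  induction M generalizing u with
  | zero => intro r; rfl
  | succ M ih =>
    intro r
    have e : dl (fun s => c * u s) = fun s => c * dl u s := by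
      funext s; simp only [dl]; ring
    rw [Function.iterate_succ_apply, Function.iterate_succ_apply, ← ih (dl u), e]

theorem dl_congr {E : Type*} [AddCommGroup E] (M : ℕ) : ∀ (u v : ℕ → E) (r : ℕ),
    (∀ s, r ≤ s → s ≤ r + M → u s = v s) → dl^[M] u r = dl^[M] v r := by
  induction M with
  | zero => intro u v r h; exact h r le_rfl le_rfl
  | succ M ih =>
    intro u v r h
    rw [Function.iterate_succ_apply, Function.iterate_succ_apply]
    apply ih
    intro s h1 h2
    simp only [dl]
    rw [h (s + 1) (by omega) (by omega), h s h1 (by omega)]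

theorem dl_kap_zero (q : ℝ) (n k : ℕ) : ∀ j r, dl^[k + 1 + j] (kap q n k) r = 0 := by
  induction k with
  | zero =>
    intro j
    have h0 : dl (kap q n 0) = fun _ => (0 : ℝ) := by funext r; simp [dl, kap_zero]
    have : ∀ j r, dl^[j] (fun _ : ℕ => (0 : ℝ)) r = 0 := by
      intro j
      induction j with
      | zero => intro r; rfl
      | succ j ih =>
        intro r
        rw [Function.iterate_succ_apply]
        have : dl (fun _ : ℕ => (0 : ℝ)) = fun _ => 0 := by funext s; simp [dl]
        rw [this]; exact ih r
    intro r
    rw [show 0 + 1 + j = j + 1 by omega, Function.iterate_succ_apply, h0]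
    exact this j r
  | succ k ih =>
    intro j r
    rw [show k + 1 + 1 + j = (k + 1 + j) + 1 by omega, Function.iterate_succ_apply]
    have : dl (kap q n (k + 1)) = fun r =>
      (-(((k : ℝ) + 1) / ((n : ℝ) + k + 1)) * (1 - q)) * kap q n k r := by
      funext r; exact kap_diff q n k r
    rw [this, dl_smul, ih]; simp

theorem dl_kap (q : ℝ) (hq1 : q ≤ 1) (n k : ℕ) (β : ℝ) (M : ℕ)
    (hβ : ((k : ℝ) + M) / ((n : ℝ) + k + M) ≤ β) : ∀ r,
    |dl^[M] (kap q n (k + M)) r| ≤ (1 - q) ^ M * β ^ M * |kap q n k r| := by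
  induction M with
  | zero => intro r; simp
  | succ M ih =>
    intro r
    have hβ0 : 0 ≤ β := le_trans (by positivity) hβ
    rw [← add_assoc, Function.iterate_succ_apply]
    have : dl (kap q n (k + M + 1)) = fun r =>
      (-((((k + M : ℕ) : ℝ) + 1) / ((n : ℝ) + ((k + M : ℕ) : ℝ) + 1)) * (1 - q)) * kap q n (k + M) r := by
      funext r; exact kap_diff q n (k + M) r
    rw [this, dl_smul, abs_mul, abs_mul, abs_neg, abs_of_nonneg (by positivity),
      abs_of_nonneg (by linarith : 0 ≤ 1 - q)]
    have h1 : (((k + M : ℕ) : ℝ) + 1) / ((n : ℝ) + ((k + M : ℕ) : ℝ) + 1) ≤ β := by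
      refine le_trans (le_of_eq ?_) hβ
      push_cast; ring_nf
    have h2 : ((k : ℝ) + M) / ((n : ℝ) + k + M) ≤ β := by
      refine le_trans ?_ hβ
      rcases Nat.eq_zero_or_pos (n + k + M) with h | h
      · have h1 : n = 0 := by omega
        have h2 : k = 0 := by omega
        have h3 : M = 0 := by omega
        subst h1 h2 h3; simp
      · have h' : (0 : ℝ) < (n : ℝ) + k + M := by exact_mod_cast h
        have hn : (0 : ℝ) ≤ n := by positivity
        rw [div_le_div_iff₀ h' (by positivity)]
        push_cast
        nlinarith
    have h3 := ih h2 r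
    have h4 : 0 ≤ 1 - q := by linarith
    calc _ ≤ β * (1 - q) * ((1 - q) ^ M * β ^ M * |kap q n k r|) := by gcongr
      _ = _ := by ring

theorem l2sum (M : ℕ) (hM : 1 ≤ M) : ∃ C : ℝ, 0 < C ∧ ∀ q : ℝ, |q| ≤ 1 / 2 → ∀ n k L : ℕ,
    L + M ≤ n + k + 1 →
    ∑ r ∈ range L, ((r : ℝ) + 1) ^ (2 * M - 1) * (dl^[M] (kap q n k) r) ^ 2 ≤ C := by
  refine ⟨4 * (((2 * M - 1).factorial : ℝ) * 2 ^ (2 * M - 1) * Real.exp (1 / 2) *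
    (4 ^ M * Real.exp M)), by positivity, ?_⟩
  intro q hq n k L hL
  rcases Nat.lt_or_ge k M with hk | hk
  · obtain ⟨j, rfl⟩ : ∃ j, M = k + 1 + j := ⟨M - (k + 1), by omega⟩
    simp only [dl_kap_zero]
    simp
    positivity
  obtain ⟨k, rfl⟩ : ∃ j, k = j + M := ⟨k - M, by omega⟩
  set β : ℝ := ((k : ℝ) + M) / ((n : ℝ) + k + M) with hβ
  have hMr : (1 : ℝ) ≤ M := by exact_mod_cast hM
  have hβ0 : 0 < β := by rw [hβ]; positivity
  have hβ1 : β ≤ 1 := by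
    rw [hβ, div_le_one (by positivity)]
    have : (0 : ℝ) ≤ n := by positivity
    linarith
  obtain ⟨hq1, hq2⟩ := abs_le.1 hq
  set x : ℝ := Real.exp (-(β / 2)) with hx
  have hx1 : β ≤ 4 * (1 - x) := by
    have h1 : 1 + β / 2 ≤ Real.exp (β / 2) := by
      have := Real.add_one_le_exp (β / 2); linarith
    have h2 : x * Real.exp (β / 2) = 1 := by rw [hx, ← Real.exp_add]; simp
    have h3 : 0 < x := Real.exp_pos _
    have h4 : x * (1 + β / 2) ≤ 1 := by exact (mul_le_mul_of_nonneg_left h1 h3.le).trans h2.le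
    have h5 : 1 / 2 ≤ x := by
      have := Real.add_one_le_exp (-(β / 2)); rw [← hx] at this; linarith
    nlinarith
  have hterm : ∀ r ∈ range L, ((r : ℝ) + 1) ^ (2 * M - 1) * (dl^[M] (kap q n (k + M)) r) ^ 2 ≤
      (4 * (((2 * M - 1).factorial : ℝ) * 2 ^ (2 * M - 1) * Real.exp (1 / 2) *
    (4 ^ M * Real.exp M))) * ((1 - x) * x ^ r) := by
    intro r hr
    rw [mem_range] at hr
    have hrn : r ≤ n + k := by omega
    have h1 := dl_kap q (by linarith) n k β M le_rfl r
    have h2 := kap_abs q n k r hrn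
    have h3 := kap_exp |q| (abs_nonneg _) (by linarith) n k r hrn
    have h4 : Real.exp (-((1 - |q|) * ((k : ℝ) / ((n : ℝ) + k)) * r)) ≤
        Real.exp (M / 2 - β * r / 2) := by
      apply Real.exp_le_exp.2
      have a1 : β * r ≤ (k : ℝ) / ((n : ℝ) + k) * r + M := by
        rcases Nat.eq_zero_or_pos (n + k) with h | h
        · have : r = 0 := by omega
          subst this; simp
        · have h' : (0 : ℝ) < (n : ℝ) + k := by exact_mod_cast h
          have hr' : (r : ℝ) ≤ n + k := by exact_mod_cast hrn
          have hr0 : (0 : ℝ) ≤ r := by positivity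
          have b1 : β ≤ ((k : ℝ) + M) / ((n : ℝ) + k) := by
            rw [hβ]
            apply div_le_div_of_nonneg_left (by positivity) h' (by linarith)
          calc β * r ≤ ((k : ℝ) + M) / ((n : ℝ) + k) * r := by gcongr
            _ = (k : ℝ) / ((n : ℝ) + k) * r + M * (r / ((n : ℝ) + k)) := by ring
            _ ≤ (k : ℝ) / ((n : ℝ) + k) * r + M * 1 := by
              gcongr; rw [div_le_one h']; exact hr'
            _ = _ := by ring
      have a2 : (0 : ℝ) ≤ (k : ℝ) / ((n : ℝ) + k) * r := by positivity
      nlinarith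
    have h5 : |dl^[M] (kap q n (k + M)) r| ≤ 2 ^ M * β ^ M * Real.exp (M / 2 - β * r / 2) := by
      refine h1.trans ?_
      have : 1 - q ≤ 2 := by linarith
      have : 0 ≤ 1 - q := by linarith
      have := h2.trans (h3.trans h4)
      gcongr
    have h6 : (dl^[M] (kap q n (k + M)) r) ^ 2 ≤ 4 ^ M * β ^ (2 * M) * (Real.exp M * Real.exp (-(β * r))) := by
      rw [← sq_abs]
      calc _ ≤ (2 ^ M * β ^ M * Real.exp (M / 2 - β * r / 2)) ^ 2 := by gcongr
        _ = (2 ^ 2) ^ M * β ^ (2 * M) * (Real.exp (M / 2 - β * r / 2)) ^ 2 := by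
          rw [mul_pow, mul_pow, ← pow_mul, ← pow_mul, ← pow_mul, mul_comm M 2]
        _ = _ := by
          rw [← Real.exp_add, ← Real.exp_nat_mul]
          norm_num
          left; ring
    have h7 : (((r : ℝ) + 1) * β) ^ (2 * M - 1) ≤
        ((2 * M - 1).factorial : ℝ) * 2 ^ (2 * M - 1) * (Real.exp (1 / 2) * Real.exp (β * r / 2)) := by
      have := Real.pow_div_factorial_le_exp (((r : ℝ) + 1) * β / 2) (by positivity) (2 * M - 1)
      rw [div_le_iff₀ (by positivity), div_pow, div_le_iff₀ (by positivity)] at this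
      refine this.trans ?_
      rw [← Real.exp_add]
      have : Real.exp (((r : ℝ) + 1) * β / 2) ≤ Real.exp (1 / 2 + β * r / 2) := by
        apply Real.exp_le_exp.2; linarith
      calc _ ≤ Real.exp (1 / 2 + β * r / 2) * ((2 * M - 1).factorial : ℝ) * 2 ^ (2 * M - 1) := by gcongr
        _ = _ := by ring
    have h8 : Real.exp (β * r / 2) * Real.exp (-(β * r)) = x ^ r := by
      rw [hx, ← Real.exp_nat_mul, ← Real.exp_add]; congr 1; ring
    have h9 : β ^ (2 * M) = β ^ (2 * M - 1) * β := by
      rw [← pow_succ]; congr 1; omega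
    calc _ ≤ ((r : ℝ) + 1) ^ (2 * M - 1) * (4 ^ M * β ^ (2 * M) * (Real.exp M * Real.exp (-(β * r)))) := by
          gcongr
      _ = (((r : ℝ) + 1) * β) ^ (2 * M - 1) * (4 ^ M * β * (Real.exp M * Real.exp (-(β * r)))) := by
          rw [h9, mul_pow]; ring
      _ ≤ (((2 * M - 1).factorial : ℝ) * 2 ^ (2 * M - 1) * (Real.exp (1 / 2) * Real.exp (β * r / 2))) *
          (4 ^ M * (4 * (1 - x)) * (Real.exp M * Real.exp (-(β * r)))) := by gcongr
      _ = (4 * (((2 * M - 1).factorial : ℝ) * 2 ^ (2 * M - 1) * Real.exp (1 / 2) *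
            (4 ^ M * Real.exp M))) * ((1 - x) * (Real.exp (β * r / 2) * Real.exp (-(β * r)))) := by ring
      _ = _ := by rw [h8]
  refine (sum_le_sum hterm).trans ?_
  rw [← mul_sum, ← mul_sum, mul_neg_geom_sum]
  have : 0 ≤ x ^ L := by positivity
  have h0 : 0 < 4 * (((2 * M - 1).factorial : ℝ) * 2 ^ (2 * M - 1) * Real.exp (1 / 2) *
            (4 ^ M * Real.exp M)) := by positivity
  nlinarith

/-! ### A discrete Gagliardo-Nirenberg inequality -/

def av (h : ℕ) (u : ℕ → ℝ) : ℕ → ℝ := fun t => (1 / (h : ℝ)) * ∑ j ∈ range h, u (t + j)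

def rem (h : ℕ) (u : ℕ → ℝ) : ℕ → ℝ := fun t => u t - av h u t

theorem sum_shift_le (u : ℕ → ℝ) (hu : ∀ i, 0 ≤ u i) (t j a b : ℕ) (h : j + a ≤ b) :
    ∑ s ∈ range a, u (t + j + s) ≤ ∑ s ∈ range b, u (t + s) := by
  calc ∑ s ∈ range a, u (t + j + s) = ∑ s ∈ (range a).image (fun s => j + s), u (t + s) := by
        rw [sum_image (by intro a _ b _ h; simpa using h)]
        simp [add_assoc]
    _ ≤ _ := by
        apply sum_le_sum_of_subset_of_nonneg
        · intro s hs
          simp only [mem_image, mem_range] at *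
          omega
        · intros; exact hu _

theorem rem_le (h : ℕ) (hh : 1 ≤ h) (u : ℕ → ℝ) (t : ℕ) :
    |rem h u t| ≤ ∑ i ∈ range (h - 1), |dl u (t + i)| := by
  have hh' : (0 : ℝ) < h := by exact_mod_cast hh
  have h1 : ∀ j ∈ range h, |u t - u (t + j)| ≤ ∑ i ∈ range (h - 1), |dl u (t + i)| := by
    intro j hj
    have : u (t + j) - u t = ∑ i ∈ range j, dl u (t + i) := by
      have := Finset.sum_range_sub (fun i => u (t + i)) j
      simp only [add_zero] at this
      rw [← this]; rfl
    rw [abs_sub_comm, this]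
    refine (abs_sum_le_sum_abs _ _).trans ?_
    apply sum_le_sum_of_subset_of_nonneg
    · intro i; simp only [mem_range] at *; omega
    · intros; positivity
  have h2 : rem h u t = (1 / (h : ℝ)) * ∑ j ∈ range h, (u t - u (t + j)) := by
    simp only [rem, av, sum_sub_distrib, sum_const, card_range, nsmul_eq_mul]
    field_simp
  rw [h2, abs_mul, abs_of_nonneg (by positivity)]
  calc _ ≤ (1 / (h : ℝ)) * ∑ j ∈ range h, ∑ i ∈ range (h - 1), |dl u (t + i)| := by
        gcongr
        exact (abs_sum_le_sum_abs _ _).trans (sum_le_sum h1)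
    _ = _ := by
        rw [sum_const, card_range, nsmul_eq_mul]; field_simp

theorem dl_rem (h : ℕ) (u : ℕ → ℝ) : dl (rem h u) = rem h (dl u) := by
  funext t
  simp only [dl, rem, av, sum_sub_distrib]
  have : ∀ j, t + j + 1 = t + 1 + j := by intro j; omega
  simp only [this]
  ring

theorem dl_rem_iter (h : ℕ) (u : ℕ → ℝ) (M : ℕ) : dl ((rem h)^[M] u) = (rem h)^[M] (dl u) := by
  induction M generalizing u with
  | zero => rfl
  | succ M ih => rw [Function.iterate_succ_apply, ih, dl_rem, Function.iterate_succ_apply]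

theorem rem_iter_le (h : ℕ) (hh : 1 ≤ h) (M : ℕ) : ∀ (u : ℕ → ℝ) (t : ℕ),
    |(rem h)^[M + 1] u t| ≤ (h : ℝ) ^ M * ∑ s ∈ range ((M + 1) * (h - 1) + 1), |dl^[M + 1] u (t + s)| := by
  induction M with
  | zero =>
    intro u t
    have := rem_le h hh u t
    simp only [zero_add, Function.iterate_one, pow_zero, one_mul]
    refine this.trans ?_
    apply sum_le_sum_of_subset_of_nonneg
    · intro i; simp only [mem_range] at *; omega
    · intros; positivity
  | succ M ih =>
    intro u t
    rw [Function.iterate_succ_apply']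
    refine (rem_le h hh _ t).trans ?_
    have hb : ∀ i ∈ range (h - 1), |dl ((rem h)^[M + 1] u) (t + i)| ≤
        (h : ℝ) ^ M * ∑ s ∈ range ((M + 1 + 1) * (h - 1) + 1), |dl^[M + 1 + 1] u (t + s)| := by
      intro i hi
      rw [mem_range] at hi
      rw [dl_rem_iter]
      refine (ih (dl u) (t + i)).trans ?_
      rw [← Function.iterate_succ_apply]
      gcongr
      apply sum_shift_le (fun s => |dl^[M + 1 + 1] u s|) (fun _ => abs_nonneg _)
      have : (M + 1 + 1) * (h - 1) = (M + 1) * (h - 1) + (h - 1) := by ring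
      omega
    refine (sum_le_sum hb).trans ?_
    rw [sum_const, card_range, nsmul_eq_mul, pow_succ]
    have : ((h - 1 : ℕ) : ℝ) ≤ h := by exact_mod_cast Nat.sub_le _ _
    have h0 : 0 ≤ (h : ℝ) ^ M * ∑ s ∈ range ((M + 1 + 1) * (h - 1) + 1), |dl^[M + 1 + 1] u (t + s)| := by
      positivity
    nlinarith

theorem av_abs (h : ℕ) (u : ℕ → ℝ) (t : ℕ) : |av h u t| ≤ (1 / (h : ℝ)) * ∑ j ∈ range h, |u (t + j)| := by
  rw [av, abs_mul, abs_of_nonneg (by positivity)]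
  gcongr
  exact abs_sum_le_sum_abs _ _

theorem av_rem (h : ℕ) (u : ℕ → ℝ) : av h (rem h u) = rem h (av h u) := by
  funext t
  simp only [rem, av, sum_sub_distrib, ← mul_sum]
  have e : ∑ i ∈ range h, ∑ j ∈ range h, u (t + i + j) = ∑ i ∈ range h, ∑ j ∈ range h, u (t + i + j) := rfl
  ring

theorem av_rem_iter_le (h : ℕ) (hh : 1 ≤ h) (M : ℕ) : ∀ (u : ℕ → ℝ) (t : ℕ),
    |(rem h)^[M] (av h u) t| ≤ ((2 : ℝ) ^ M / h) * ∑ s ∈ range ((M + 1) * (h - 1) + 1), |u (t + s)| := by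
  have hh' : (0 : ℝ) < h := by exact_mod_cast hh
  induction M with
  | zero =>
    intro u t
    have := av_abs h u t
    simp only [Function.iterate_zero, id, pow_zero, zero_add, one_mul]
    rwa [Nat.sub_add_cancel hh]
  | succ M ih =>
    intro u t
    rw [Function.iterate_succ_apply']
    set B := ((2 : ℝ) ^ M / h) * ∑ s ∈ range ((M + 1 + 1) * (h - 1) + 1), |u (t + s)| with hB
    have hb : ∀ i, i ≤ h - 1 → |(rem h)^[M] (av h u) (t + i)| ≤ B := by
      intro i hi
      refine (ih u (t + i)).trans ?_
      rw [hB]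
      gcongr
      apply sum_shift_le (fun s => |u s|) (fun _ => abs_nonneg _)
      have : (M + 1 + 1) * (h - 1) = (M + 1) * (h - 1) + (h - 1) := by ring
      omega
    have h1 : |rem h ((rem h)^[M] (av h u)) t| ≤ B + B := by
      rw [rem]
      refine (abs_sub _ _).trans (add_le_add (hb 0 (by omega)) ?_)
      refine (av_abs _ _ _).trans ?_
      calc _ ≤ (1 / (h : ℝ)) * ∑ j ∈ range h, B := by
            gcongr with j hj
            rw [mem_range] at hj
            exact hb j (by omega)
        _ = B := by rw [sum_const, card_range, nsmul_eq_mul]; field_simp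
    refine h1.trans (le_of_eq ?_)
    rw [hB, pow_succ]; ring

theorem main_part_le (h : ℕ) (hh : 1 ≤ h) (M : ℕ) (u : ℕ → ℝ) (t : ℕ) :
    |u t - (rem h)^[M] u t| ≤ ((2 : ℝ) ^ M / h) * ∑ s ∈ range (M * (h - 1) + 1), |u (t + s)| := by
  have hh' : (0 : ℝ) < h := by exact_mod_cast hh
  have key : ∀ M, |u t - (rem h)^[M] u t| ≤
    (((2 : ℝ) ^ M - 1) / h) * ∑ s ∈ range (M * (h - 1) + 1), |u (t + s)| := by
    intro M
    induction M with
    | zero => simp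
    | succ M ih =>
      have e : u t - (rem h)^[M + 1] u t = (u t - (rem h)^[M] u t) + (rem h)^[M] (av h u) t := by
        have c : ∀ (M : ℕ) (v : ℕ → ℝ), av h ((rem h)^[M] v) = (rem h)^[M] (av h v) := by
          intro M
          induction M with
          | zero => intro v; rfl
          | succ M ih => intro v; rw [Function.iterate_succ_apply, ih, av_rem, Function.iterate_succ_apply]
        rw [← c, Function.iterate_succ_apply']
        simp only [rem]; ring
      rw [e]
      refine (abs_add_le _ _).trans ((add_le_add ih (av_rem_iter_le h hh M u t)).trans ?_)
      have : ∑ s ∈ range (M * (h - 1) + 1), |u (t + s)| ≤ ∑ s ∈ range ((M + 1) * (h - 1) + 1), |u (t + s)| := by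
        apply sum_le_sum_of_subset_of_nonneg
        · intro i; simp only [mem_range] at *
          have : (M + 1) * (h - 1) = (M) * (h - 1) + (h - 1) := by ring
          omega
        · intros; positivity
      have h2 : 0 ≤ ((2 : ℝ) ^ M - 1) / h := by
        apply div_nonneg _ hh'.le
        have := one_le_pow₀ (by norm_num : (1 : ℝ) ≤ 2) (n := M)
        linarith
      calc _ ≤ (((2 : ℝ) ^ M - 1) / h) * ∑ s ∈ range ((M + 1) * (h - 1) + 1), |u (t + s)| +
            2 ^ M / h * ∑ s ∈ range ((M + 1) * (h - 1) + 1), |u (t + s)| := by gcongr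
        _ = _ := by rw [pow_succ]; ring
  refine (key M).trans ?_
  gcongr
  linarith

theorem gn0 (h : ℕ) (hh : 1 ≤ h) (M : ℕ) (u : ℕ → ℝ) (t : ℕ) :
    |u t| ≤ ((2 : ℝ) ^ (M + 1) / h) * ∑ s ∈ range ((M + 1) * (h - 1) + 1), |u (t + s)| +
      (h : ℝ) ^ M * ∑ s ∈ range ((M + 1) * (h - 1) + 1), |dl^[M + 1] u (t + s)| := by
  have h1 := main_part_le h hh (M + 1) u t
  have h2 := rem_iter_le h hh M u t
  calc |u t| = |(u t - (rem h)^[M + 1] u t) + (rem h)^[M + 1] u t| := by ring_nf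
    _ ≤ _ := (abs_add_le _ _).trans (add_le_add h1 h2)

/-! ### Fourier analysis -/

def chi {m N : ℕ} (a x : Fin N → ZMod (m + 1)) : ℂ := ∏ i, (ZMod.stdAddChar (a i * x i) : ℂ)

def four {m N : ℕ} (f : (Fin N → ZMod (m + 1)) → ℂ) (a : Fin N → ZMod (m + 1)) : ℂ :=
  ∑ x, f x * chi a x

def sph (m N r : ℕ) : Finset (Fin N → ZMod (m + 1)) := univ.filter fun y => hw y = r

def S (m N r : ℕ) (f : (Fin N → ZMod (m + 1)) → ℝ) (x : Fin N → ZMod (m + 1)) : ℝ :=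
  ((sph m N r).card : ℝ)⁻¹ * ∑ y ∈ sph m N r, f (x - y)

theorem chi_add {m N : ℕ} (a x y : Fin N → ZMod (m + 1)) : chi a (x + y) = chi a x * chi a y := by
  simp only [chi, Pi.add_apply, mul_add, AddChar.map_add_eq_mul, prod_mul_distrib]

theorem chi_neg {m N : ℕ} (a x : Fin N → ZMod (m + 1)) : chi a (-x) = (starRingEnd ℂ) (chi a x) := by
  simp only [chi, Pi.neg_apply, mul_neg, map_prod, AddChar.map_neg_eq_conj]

theorem sum_chi {m N : ℕ} (x : Fin N → ZMod (m + 1)) :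
    ∑ a, chi a x = if x = 0 then (Fintype.card (Fin N → ZMod (m + 1)) : ℂ) else 0 := by
  have h1 : ∑ a, chi a x = ∏ i, ∑ t : ZMod (m + 1), (ZMod.stdAddChar (t * x i) : ℂ) := by
    rw [prod_univ_sum, Fintype.piFinset_univ]; rfl
  rw [h1]
  have h2 : ∀ i, ∑ t : ZMod (m + 1), (ZMod.stdAddChar (t * x i) : ℂ) =
      if x i = 0 then ((m + 1 : ℕ) : ℂ) else 0 := by
    intro i
    have := AddChar.sum_mulShift (x i) (ZMod.isPrimitive_stdAddChar (m + 1))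
    rw [this]
    simp [ZMod.card]
  simp only [h2]
  split_ifs with h
  · subst h
    simp [ZMod.card]
  · obtain ⟨i, hi⟩ : ∃ i, x i ≠ 0 := by
      by_contra hc
      push Not at hc
      exact h (funext hc)
    exact prod_eq_zero (mem_univ i) (by simp [hi])

theorem parseval {m N : ℕ} (f : (Fin N → ZMod (m + 1)) → ℂ) :
    ∑ a, ‖four f a‖ ^ 2 = (Fintype.card (Fin N → ZMod (m + 1)) : ℝ) * ∑ x, ‖f x‖ ^ 2 := by
  have hc : ∀ z : ℂ, ((‖z‖ ^ 2 : ℝ) : ℂ) = z * (starRingEnd ℂ) z := by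
    intro z; rw [Complex.mul_conj, Complex.normSq_eq_norm_sq]
  have : ((∑ a, ‖four f a‖ ^ 2 : ℝ) : ℂ) =
      (((Fintype.card (Fin N → ZMod (m + 1)) : ℝ) * ∑ x, ‖f x‖ ^ 2 : ℝ) : ℂ) := by
    rw [Complex.ofReal_sum, Complex.ofReal_mul, Complex.ofReal_sum]
    simp only [hc]
    calc ∑ a, four f a * (starRingEnd ℂ) (four f a)
        = ∑ a, ∑ x, ∑ y, f x * (starRingEnd ℂ) (f y) * chi a (x - y) := by
          apply sum_congr rfl; intro a _
          simp only [four, map_sum, map_mul, sum_mul_sum, ← chi_neg]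
          apply sum_congr rfl; intro x _
          apply sum_congr rfl; intro y _
          rw [sub_eq_add_neg, chi_add]; ring
      _ = ∑ x, ∑ y, f x * (starRingEnd ℂ) (f y) * ∑ a, chi a (x - y) := by
          rw [sum_comm]
          apply sum_congr rfl; intro x _
          rw [sum_comm]
          simp only [mul_sum]
      _ = _ := by
          simp only [sum_chi, sub_eq_zero]
          simp only [mul_ite, mul_zero, sum_ite_eq, mem_univ, if_true]
          rw [mul_sum]
          apply sum_congr rfl; intro x _
          push_cast
          ring
  exact_mod_cast this

theorem four_inj {m N : ℕ} (f g : (Fin N → ZMod (m + 1)) → ℂ) (h : ∀ a, four f a = four g a) : f = g := by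
  have h1 : ∀ a, four (fun x => f x - g x) a = 0 := by
    intro a
    have : four (fun x => f x - g x) a = four f a - four g a := by
      simp only [four, sub_mul, sum_sub_distrib]
    rw [this, h, sub_self]
  have h2 := parseval (fun x => f x - g x)
  simp only [h1] at h2
  simp only [norm_zero, ne_eq, OfNat.ofNat_ne_zero, not_false_eq_true, zero_pow, sum_const_zero] at h2
  have h3 : (Fintype.card (Fin N → ZMod (m + 1)) : ℝ) ≠ 0 := by
    exact_mod_cast Fintype.card_ne_zero
  have h4 : ∑ x, ‖f x - g x‖ ^ 2 = 0 := by
    rcases mul_eq_zero.1 h2.symm with h | h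
    · exact absurd h h3
    · exact h
  funext x
  have := (sum_eq_zero_iff_of_nonneg (fun i _ => by positivity)).1 h4 x (mem_univ x)
  rw [sq_eq_zero_iff, norm_eq_zero, sub_eq_zero] at this
  exact this

open Polynomial in
theorem kap_coeff (q : ℝ) (n k : ℕ) : ∀ r, ((1 + X) ^ n * (1 + C q * X) ^ k : ℝ[X]).coeff r =
    ((n + k).choose r : ℝ) * kap q n k r := by
  induction k with
  | zero =>
    intro r
    simp [kap_zero, Polynomial.coeff_one_add_X_pow]
  | succ k ih =>
    intro r
    have e : ((1 + X) ^ n * (1 + C q * X) ^ (k + 1) : ℝ[X]) =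
      ((1 + X) ^ n * (1 + C q * X) ^ k) + C q * (X * ((1 + X) ^ n * (1 + C q * X) ^ k)) := by
      rw [pow_succ]; ring
    rw [e, coeff_add, coeff_C_mul]
    have hN : (n : ℝ) + k + 1 ≠ 0 := by positivity
    cases r with
    | zero => rw [ih, kap_succ]; simp
    | succ r =>
      rw [coeff_X_mul, ih, ih, kap_succ, Nat.add_sub_cancel]
      have c1 : ((n + (k + 1)).choose (r + 1) : ℝ) * (((r + 1 : ℕ) : ℝ) / ((n : ℝ) + k + 1)) =
          (n + k).choose r := by
        have := Nat.add_one_mul_choose_eq (n + k) r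
        have t : ((n : ℝ) + k + 1) * (n + k).choose r = (n + k + 1).choose (r + 1) * ((r : ℝ) + 1) := by
          exact_mod_cast this
        rw [← add_assoc]
        push_cast
        field_simp
        linarith
      have c2 : ((n + (k + 1)).choose (r + 1) : ℝ) = (n + k).choose r + (n + k).choose (r + 1) := by
        rw [← add_assoc, Nat.choose_succ_succ]; push_cast; rfl
      have c3 : ((n + (k + 1)).choose (r + 1) : ℝ) * (1 - ((r + 1 : ℕ) : ℝ) / ((n : ℝ) + k + 1)) =
          (n + k).choose (r + 1) := by
        rw [mul_sub, c1, c2]; ring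
      rw [← c1]
      nth_rewrite 1 [← c3]
      ring

open Polynomial in
theorem poly_id {m N : ℕ} (hm : 1 ≤ m) (a : Fin N → ZMod (m + 1)) :
    ∑ y, (C (chi a y) * (C (m : ℂ)⁻¹ * X) ^ hw y : ℂ[X]) =
      (1 + X) ^ (N - hw a) * (1 + C (-(m : ℂ)⁻¹) * X) ^ hw a := by
  have hm0 : (m : ℂ) ≠ 0 := by
    have : m ≠ 0 := by omega
    exact_mod_cast this
  have h1 : ∀ y : Fin N → ZMod (m + 1), (C (chi a y) * (C (m : ℂ)⁻¹ * X) ^ hw y : ℂ[X]) =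
      ∏ i, (C (ZMod.stdAddChar (a i * y i) : ℂ) * (if y i ≠ 0 then C (m : ℂ)⁻¹ * X else 1)) := by
    intro y
    rw [prod_mul_distrib, prod_ite, prod_const_one, mul_one, prod_const, chi, map_prod]
    rfl
  simp only [h1]
  have h2 := prod_univ_sum (fun _ : Fin N => (univ : Finset (ZMod (m + 1))))
    (fun i t => (C (ZMod.stdAddChar (a i * t) : ℂ) * (if t ≠ 0 then C (m : ℂ)⁻¹ * X else 1) : ℂ[X]))
  rw [Fintype.piFinset_univ] at h2
  rw [← h2]
  have h3 : ∀ i, ∑ t : ZMod (m + 1), (C (ZMod.stdAddChar (a i * t) : ℂ) *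
      (if t ≠ 0 then C (m : ℂ)⁻¹ * X else 1) : ℂ[X]) =
      if a i ≠ 0 then 1 + C (-(m : ℂ)⁻¹) * X else 1 + X := by
    intro i
    have e1 : ∀ t : ZMod (m + 1), (C (ZMod.stdAddChar (a i * t) : ℂ) *
      (if t ≠ 0 then C (m : ℂ)⁻¹ * X else 1) : ℂ[X]) = C (ZMod.stdAddChar (t * a i) : ℂ) * (C (m : ℂ)⁻¹ * X) +
        (if t = 0 then (1 - C (m : ℂ)⁻¹ * X) else 0) := by
      intro t
      by_cases ht : t = 0
      · subst ht; simp
      · simp only [ht, ne_eq, not_false_eq_true, if_true, if_false, add_zero, mul_comm t (a i)]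
    simp only [e1, sum_add_distrib, sum_ite_eq', mem_univ, if_true]
    rw [← sum_mul, ← map_sum, AddChar.sum_mulShift (a i) (ZMod.isPrimitive_stdAddChar (m + 1))]
    by_cases ha : a i = 0
    · simp only [ha, if_true, ZMod.card, ne_eq, not_true, if_false]
      have : (C (((m + 1 : ℕ) : ℂ)) * (C (m : ℂ)⁻¹ * X) : ℂ[X]) = C ((m : ℂ)⁻¹) * X + X := by
        rw [← mul_assoc, ← C_mul]
        have : ((m + 1 : ℕ) : ℂ) * (m : ℂ)⁻¹ = (m : ℂ)⁻¹ + 1 := by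
          push_cast; field_simp
          ring
        rw [this, C_add, C_1]; ring
      push_cast at this ⊢
      rw [this]; ring
    · simp [ha]; ring
  simp only [h3]
  rw [prod_ite, prod_const, prod_const, mul_comm]
  have h4 : (univ.filter fun i => ¬ (a i ≠ 0)).card = N - hw a := by
    have := card_filter_add_card_filter_not (s := (univ : Finset (Fin N))) (fun i => a i ≠ 0)
    rw [card_univ, Fintype.card_fin] at this
    unfold hw; omega
  rw [h4]; rfl

theorem hw_le {m N : ℕ} (a : Fin N → ZMod (m + 1)) : hw a ≤ N := by
  unfold hw
  exact (card_filter_le _ _).trans (by simp)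

open Polynomial in
theorem sph_sum {m N : ℕ} (hm : 1 ≤ m) (a : Fin N → ZMod (m + 1)) (r : ℕ) :
    (∑ y ∈ sph m N r, chi a y) * ((m : ℂ)⁻¹) ^ r =
      (N.choose r : ℂ) * (kap (-(m : ℝ)⁻¹) (N - hw a) (hw a) r : ℂ) := by
  have h1 := congrArg (fun p => coeff p r) (poly_id hm a)
  simp only [finsetSum_coeff] at h1
  have h2 : ∀ y : Fin N → ZMod (m + 1), (C (chi a y) * (C (m : ℂ)⁻¹ * X) ^ hw y : ℂ[X]).coeff r =
      if hw y = r then chi a y * ((m : ℂ)⁻¹) ^ r else 0 := by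
    intro y
    rw [mul_pow, ← C_pow, coeff_C_mul, coeff_C_mul, coeff_X_pow]
    by_cases h : hw y = r
    · simp [h]
    · simp [h, Ne.symm h]
  simp only [h2] at h1
  rw [← sum_filter, ← sum_mul] at h1
  have h3 : ((1 + X) ^ (N - hw a) * (1 + C (-(m : ℂ)⁻¹) * X) ^ hw a : ℂ[X]) =
      ((1 + X) ^ (N - hw a) * (1 + C (-(m : ℝ)⁻¹) * X) ^ hw a : ℝ[X]).map Complex.ofRealHom := by
    simp [Polynomial.map_mul, Polynomial.map_pow]
  rw [h3, coeff_map, kap_coeff, Nat.sub_add_cancel (hw_le a)] at h1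
  rw [sph, h1]
  simp

theorem sph_card {m N : ℕ} (hm : 1 ≤ m) (r : ℕ) :
    ((sph m N r).card : ℂ) * ((m : ℂ)⁻¹) ^ r = (N.choose r : ℂ) := by
  have := sph_sum hm (0 : Fin N → ZMod (m + 1)) r
  have h0 : hw (0 : Fin N → ZMod (m + 1)) = 0 := by simp [hw]
  rw [h0, kap_zero] at this
  simpa [chi] using this

theorem sigma_hat {m N : ℕ} (hm : 1 ≤ m) (a : Fin N → ZMod (m + 1)) (r : ℕ) (hr : r ≤ N) :
    ((sph m N r).card : ℂ)⁻¹ * ∑ y ∈ sph m N r, chi a y =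
      (kap (-(m : ℝ)⁻¹) (N - hw a) (hw a) r : ℂ) := by
  have h1 := sph_sum hm a r
  have h2 := sph_card (N := N) hm r
  have h3 : (N.choose r : ℂ) ≠ 0 := by
    exact_mod_cast (Nat.choose_pos hr).ne'
  rw [← h2] at h1 h3
  have h4 : ((m : ℂ)⁻¹) ^ r ≠ 0 := right_ne_zero_of_mul h3
  have h5 : ((sph m N r).card : ℂ) ≠ 0 := left_ne_zero_of_mul h3
  rw [inv_mul_eq_iff_eq_mul₀ h5]
  apply mul_right_cancel₀ h4
  rw [h1]; ring

theorem sph_card_pos {m N : ℕ} (hm : 1 ≤ m) (r : ℕ) (hr : r ≤ N) : 0 < (sph m N r).card := by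
  have h2 := sph_card (N := N) hm r
  have h3 : (N.choose r : ℂ) ≠ 0 := by
    exact_mod_cast (Nat.choose_pos hr).ne'
  rw [← h2] at h3
  have h5 : ((sph m N r).card : ℂ) ≠ 0 := left_ne_zero_of_mul h3
  exact Nat.pos_of_ne_zero (by exact_mod_cast h5)

theorem four_S {m N : ℕ} (hm : 1 ≤ m) (f : (Fin N → ZMod (m + 1)) → ℝ) (a : Fin N → ZMod (m + 1))
    (r : ℕ) (hr : r ≤ N) : four (fun x => (S m N r f x : ℂ)) a =
      (kap (-(m : ℝ)⁻¹) (N - hw a) (hw a) r : ℂ) * four (fun x => (f x : ℂ)) a := by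
  rw [← sigma_hat hm a r hr]
  simp only [four, S]
  push_cast
  calc ∑ x, ((sph m N r).card : ℂ)⁻¹ * (∑ y ∈ sph m N r, (f (x - y) : ℂ)) * chi a x
      = ((sph m N r).card : ℂ)⁻¹ * ∑ y ∈ sph m N r, ∑ x, (f (x - y) : ℂ) * chi a x := by
        rw [sum_comm, mul_sum]
        apply sum_congr rfl; intro x _
        rw [mul_assoc, sum_mul]
    _ = ((sph m N r).card : ℂ)⁻¹ * ∑ y ∈ sph m N r, ∑ x, (f x : ℂ) * (chi a x * chi a y) := by
        congr 1
        apply sum_congr rfl; intro y _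
        rw [← Equiv.sum_comp (Equiv.addRight y)]
        apply sum_congr rfl; intro x _
        simp [chi_add]
    _ = _ := by
        rw [mul_assoc, sum_mul]
        congr 1
        apply sum_congr rfl; intro y _
        rw [mul_sum]
        apply sum_congr rfl; intro x _
        ring

theorem dl_ofReal (M : ℕ) : ∀ (u : ℕ → ℝ) (s : ℕ),
    ((dl^[M] u s : ℝ) : ℂ) = dl^[M] (fun r => (u r : ℂ)) s := by
  induction M with
  | zero => intro u s; rfl
  | succ M ih =>
    intro u s
    rw [Function.iterate_succ_apply, ih, Function.iterate_succ_apply]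
    have : (fun r => ((dl u r : ℝ) : ℂ)) = dl (fun r => (u r : ℂ)) := by
      funext r; simp [dl]
    rw [this]

theorem four_dl {m N : ℕ} (M : ℕ) (a : Fin N → ZMod (m + 1)) :
    ∀ (F : ℕ → (Fin N → ZMod (m + 1)) → ℂ) (s : ℕ),
    four (fun x => dl^[M] (fun r => F r x) s) a = dl^[M] (fun r => four (F r) a) s := by
  induction M with
  | zero => intro F s; rfl
  | succ M ih =>
    intro F s
    simp only [Function.iterate_succ_apply]
    have := ih (fun r x => F (r + 1) x - F r x) s
    refine Eq.trans ?_ (this.trans ?_)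
    · rfl
    · have e : (fun r => four (fun x => F (r + 1) x - F r x) a) = dl fun r => four (F r) a := by
        funext r
        simp [dl, four, sub_mul, sum_sub_distrib]
      rw [e]

theorem dl_mulC (c : ℂ) (M : ℕ) : ∀ (u : ℕ → ℂ) (r : ℕ),
    dl^[M] (fun s => u s * c) r = dl^[M] u r * c := by
  induction M with
  | zero => intro u r; rfl
  | succ M ih =>
    intro u r
    have e : dl (fun s => u s * c) = fun s => dl u s * c := by
      funext s; simp only [dl]; ring
    rw [Function.iterate_succ_apply, Function.iterate_succ_apply, ← ih (dl u), e]

theorem l2bound (M : ℕ) (hM : 1 ≤ M) : ∃ C : ℝ, 0 < C ∧ ∀ m : ℕ, 2 ≤ m → ∀ N L : ℕ, L + M ≤ N + 1 →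
    ∀ f : (Fin N → ZMod (m + 1)) → ℝ,
    ∑ x, ∑ s ∈ range L, ((s : ℝ) + 1) ^ (2 * M - 1) * (dl^[M] (fun r => S m N r f x) s) ^ 2 ≤
      C * ∑ x, f x ^ 2 := by
  obtain ⟨C, hC, H⟩ := l2sum M hM
  refine ⟨C, hC, ?_⟩
  intro m hm N L hL f
  have hq : |(-(m : ℝ)⁻¹)| ≤ 1 / 2 := by
    rw [abs_neg, abs_of_nonneg (by positivity), one_div]
    have : (2 : ℝ) ≤ m := by exact_mod_cast hm
    gcongr
  have hcard : (0 : ℝ) < (Fintype.card (Fin N → ZMod (m + 1)) : ℝ) := by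
    exact_mod_cast Fintype.card_pos
  have h1 : ∀ s ∈ range L, (Fintype.card (Fin N → ZMod (m + 1)) : ℝ) *
      ∑ x, (dl^[M] (fun r => S m N r f x) s) ^ 2 =
      ∑ a : Fin N → ZMod (m + 1), (dl^[M] (kap (-(m : ℝ)⁻¹) (N - hw a) (hw a)) s) ^ 2 * ‖four (fun x => (f x : ℂ)) a‖ ^ 2 := by
    intro s hs
    rw [mem_range] at hs
    have := parseval (fun x => dl^[M] (fun r => (S m N r f x : ℂ)) s)
    have e1 : ∀ x, ‖dl^[M] (fun r => (S m N r f x : ℂ)) s‖ ^ 2 = (dl^[M] (fun r => S m N r f x) s) ^ 2 := by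
      intro x
      rw [← dl_ofReal, Complex.norm_real, Real.norm_eq_abs, sq_abs]
    simp only [e1] at this
    rw [← this]
    apply sum_congr rfl; intro a _
    rw [four_dl M a (fun r x => (S m N r f x : ℂ)) s]
    have e2 : dl^[M] (fun r => four (fun x => (S m N r f x : ℂ)) a) s =
        dl^[M] (fun r => (kap (-(m : ℝ)⁻¹) (N - hw a) (hw a) r : ℂ) * four (fun x => (f x : ℂ)) a) s := by
      apply dl_congr
      intro t h1 h2
      exact four_S (by omega) f a t (by omega)
    rw [e2, dl_mulC, norm_mul, mul_pow, ← dl_ofReal, Complex.norm_real, Real.norm_eq_abs, sq_abs]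
  have h2 : (Fintype.card (Fin N → ZMod (m + 1)) : ℝ) *
      ∑ x, ∑ s ∈ range L, ((s : ℝ) + 1) ^ (2 * M - 1) * (dl^[M] (fun r => S m N r f x) s) ^ 2 =
      ∑ a : Fin N → ZMod (m + 1), (∑ s ∈ range L, ((s : ℝ) + 1) ^ (2 * M - 1) *
        (dl^[M] (kap (-(m : ℝ)⁻¹) (N - hw a) (hw a)) s) ^ 2) * ‖four (fun x => (f x : ℂ)) a‖ ^ 2 := by
    rw [sum_comm, mul_sum]
    simp only [sum_mul]
    rw [sum_comm]
    apply sum_congr rfl; intro s hs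
    rw [← mul_sum, mul_left_comm, h1 s hs, mul_sum]
    apply sum_congr rfl; intro a _
    ring
  have h3 := parseval (fun x => (f x : ℂ))
  simp only [Complex.norm_real, Real.norm_eq_abs, sq_abs] at h3
  refine le_of_mul_le_mul_left ?_ hcard
  rw [h2, mul_left_comm, ← h3, mul_sum]
  apply sum_le_sum
  intro a _
  gcongr
  apply H _ hq
  rw [Nat.sub_add_cancel (hw_le a)]; exact hL

theorem kap_at_zero (q : ℝ) (n k : ℕ) : kap q n k 0 = 1 := by
  induction k with
  | zero => rfl
  | succ k ih => rw [kap_succ]; simp [ih]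

theorem kap_at_one (q : ℝ) (n k : ℕ) : kap q n k 1 = 1 - (k : ℝ) / ((n : ℝ) + k) * (1 - q) := by
  cases k with
  | zero => simp [kap_zero]
  | succ k =>
    have := kap_diff q n k 0
    rw [kap_at_zero, kap_at_zero, zero_add] at this
    push_cast
    rw [← add_assoc]
    linarith

theorem S_three {m N : ℕ} (hm : 1 ≤ m) (hN : 1 ≤ N) (f : (Fin N → ZMod (m + 1)) → ℝ)
    (x : Fin N → ZMod (m + 1)) (r : ℕ) (hr : r ≤ N) :
    S m N 1 (S m N r f) x = (1 - (r : ℝ) / N) * S m N (r + 1) f x +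
      ((r : ℝ) / N) * (1 - (m : ℝ)⁻¹) * S m N r f x + ((r : ℝ) / N) * (m : ℝ)⁻¹ * S m N (r - 1) f x := by
  have key : (fun x => (S m N 1 (S m N r f) x : ℂ)) = (fun x => ((1 - (r : ℝ) / N : ℝ) : ℂ) * S m N (r + 1) f x +
      (((r : ℝ) / N * (1 - (m : ℝ)⁻¹) : ℝ) : ℂ) * S m N r f x +
      (((r : ℝ) / N * (m : ℝ)⁻¹ : ℝ) : ℂ) * S m N (r - 1) f x) := by
    apply four_inj
    intro a
    rw [four_S hm _ a 1 hN, four_S hm f a r hr]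
    have e : four (fun x => ((1 - (r : ℝ) / N : ℝ) : ℂ) * S m N (r + 1) f x +
      (((r : ℝ) / N * (1 - (m : ℝ)⁻¹) : ℝ) : ℂ) * S m N r f x +
      (((r : ℝ) / N * (m : ℝ)⁻¹ : ℝ) : ℂ) * S m N (r - 1) f x) a =
       ((1 - (r : ℝ) / N : ℝ) : ℂ) * four (fun x => (S m N (r + 1) f x : ℂ)) a +
      (((r : ℝ) / N * (1 - (m : ℝ)⁻¹) : ℝ) : ℂ) * four (fun x => (S m N r f x : ℂ)) a +
      (((r : ℝ) / N * (m : ℝ)⁻¹ : ℝ) : ℂ) * four (fun x => (S m N (r - 1) f x : ℂ)) a := by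
      simp only [four, add_mul, sum_add_distrib, mul_sum, mul_assoc]
    rw [e, four_S hm f a r hr, four_S hm f a (r - 1) (by omega)]
    have hk := hw_le a
    have h3 := kap_three (-(m : ℝ)⁻¹) (N - hw a) (hw a) r (by omega)
    have hc : ((N - hw a : ℕ) : ℝ) + (hw a : ℝ) = N := by
      exact_mod_cast Nat.sub_add_cancel hk
    have h1 := kap_at_one (-(m : ℝ)⁻¹) (N - hw a) (hw a)
    rw [← h1, hc] at h3
    have h4 : ((1 - (r : ℝ) / N : ℝ) : ℂ) * four (fun x => (S m N (r + 1) f x : ℂ)) a =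
      ((1 - (r : ℝ) / N : ℝ) : ℂ) * ((kap (-(m : ℝ)⁻¹) (N - hw a) (hw a) (r + 1) : ℂ) * four (fun x => (f x : ℂ)) a) := by
      rcases Nat.lt_or_ge r N with h | h
      · rw [four_S hm f a (r + 1) h]
      · have : r = N := by omega
        have hN' : (N : ℝ) ≠ 0 := by positivity
        rw [this, div_self hN']; simp
    rw [h4, ← mul_assoc, ← Complex.ofReal_mul, h3]
    push_cast
    ring
  have := congrFun key x
  exact_mod_cast this

/-! ### The maximal ergodic inequality -/

theorem hopf {α : Type*} [Fintype α] (K : (α → ℝ) →ₗ[ℝ] (α → ℝ))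
    (hmono : ∀ u : α → ℝ, (∀ x, 0 ≤ u x) → ∀ x, 0 ≤ K u x)
    (hsum : ∀ u : α → ℝ, ∑ x, K u x = ∑ x, u x) (L : ℕ) (g : α → ℝ) :
    0 ≤ ∑ x ∈ univ.filter (fun x => ∃ n ≤ L, 0 < ∑ i ∈ range n, (K ^ i) g x), g x := by
  classical
  set T : ℕ → α → ℝ := fun n x => ∑ i ∈ range n, (K ^ i) g x with hT
  set Mx : α → ℝ := fun x => (range (L + 1)).sup' nonempty_range_add_one (fun n => T n x) with hMx
  have hle : ∀ n ≤ L, ∀ x, T n x ≤ Mx x := by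
    intro n hn x
    exact le_sup' (fun n => T n x) (mem_range.2 (by omega))
  have hM0 : ∀ x, 0 ≤ Mx x := by
    intro x
    have := hle 0 (by omega) x
    simpa [hT] using this
  have hsucc : ∀ n x, T (n + 1) x = g x + K (T n) x := by
    intro n x
    have : K (T n) = fun x => ∑ i ∈ range n, (K ^ (i + 1)) g x := by
      have e : T n = ∑ i ∈ range n, (K ^ i) g := by
        funext y; simp [hT]
      rw [e, map_sum]
      funext y
      simp [pow_succ', Module.End.mul_apply]
    rw [this]
    simp only [hT]
    rw [sum_range_succ']
    simp [add_comm]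
  have hK : ∀ n ≤ L, ∀ x, K (T n) x ≤ K Mx x := by
    intro n hn x
    have := hmono (Mx - T n) (fun y => by simpa using hle n hn y) x
    rw [map_sub, Pi.sub_apply] at this
    linarith
  set E := univ.filter (fun x => ∃ n ≤ L, 0 < T n x) with hE
  have hg : ∀ x ∈ E, Mx x - K Mx x ≤ g x := by
    intro x hx
    obtain ⟨n0, hn0, hpos⟩ := (mem_filter.1 hx).2
    obtain ⟨n, hn, hne⟩ := exists_mem_eq_sup' (nonempty_range_add_one (n := L)) (fun n => T n x)
    have hMn : Mx x = T n x := hne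
    have hMpos : 0 < Mx x := lt_of_lt_of_le hpos (hle n0 hn0 x)
    rw [mem_range] at hn
    cases n with
    | zero =>
      exfalso
      rw [hMn] at hMpos
      simp [hT] at hMpos
    | succ n =>
      rw [hMn, hsucc]
      have := hK n (by omega) x
      linarith
  have hKM : ∀ x, 0 ≤ K Mx x := hmono Mx hM0
  have h1 : ∑ x ∈ E, Mx x = ∑ x, Mx x := by
    apply sum_subset (subset_univ _)
    intro x _ hx
    have h2 : ∀ n ≤ L, T n x ≤ 0 := by
      intro n hn
      by_contra hc
      push Not at hc
      exact hx (mem_filter.2 ⟨mem_univ _, n, hn, hc⟩)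
    apply le_antisymm _ (hM0 x)
    apply sup'_le
    intro n hn
    rw [mem_range] at hn
    exact h2 n (by omega)
  have h2 : ∑ x ∈ E, K Mx x ≤ ∑ x, K Mx x :=
    sum_le_sum_of_subset_of_nonneg (subset_univ _) (fun x _ _ => hKM x)
  have h3 := sum_le_sum hg
  rw [sum_sub_distrib, h1] at h3
  rw [hsum] at h2
  linarith

theorem hopf_weak {α : Type*} [Fintype α] (K : (α → ℝ) →ₗ[ℝ] (α → ℝ))
    (hmono : ∀ u : α → ℝ, (∀ x, 0 ≤ u x) → ∀ x, 0 ≤ K u x)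
    (hsum : ∀ u : α → ℝ, ∑ x, K u x = ∑ x, u x) (hone : K (fun _ => 1) = fun _ => 1)
    (L : ℕ) (f : α → ℝ) (hf : ∀ x, 0 ≤ f x) (lam : ℝ) :
    lam * ((univ.filter (fun x => ∃ n ≤ L, lam * n < ∑ i ∈ range n, (K ^ i) f x)).card : ℝ) ≤ ∑ x, f x := by
  have h := hopf K hmono hsum L (f - lam • (fun _ => (1 : ℝ)))
  have hone' : ∀ i, (K ^ i) (fun _ => (1 : ℝ)) = fun _ => 1 := by
    intro i
    induction i with
    | zero => rfl
    | succ i ih => rw [pow_succ', Module.End.mul_apply, ih, hone]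
  have e : ∀ n x, ∑ i ∈ range n, (K ^ i) (f - lam • (fun _ => (1 : ℝ))) x =
      ∑ i ∈ range n, (K ^ i) f x - lam * n := by
    intro n x
    simp only [map_sub, map_smul, hone', Pi.sub_apply, Pi.smul_apply, smul_eq_mul, mul_one,
      sum_sub_distrib, sum_const, card_range, nsmul_eq_mul]
    ring
  simp only [e, sub_pos] at h
  simp only [Pi.sub_apply, Pi.smul_apply, smul_eq_mul, mul_one, sum_sub_distrib, sum_const,
    nsmul_eq_mul] at h
  have h2 : ∑ x ∈ univ.filter (fun x => ∃ n ≤ L, lam * n < ∑ i ∈ range n, (K ^ i) f x), f x ≤ ∑ x, f x :=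
    sum_le_sum_of_subset_of_nonneg (subset_univ _) (fun x _ _ => hf x)
  linarith

/-! ### The radial walk -/

def wk (m N : ℕ) : (ℕ → ℝ) →ₗ[ℝ] (ℕ → ℝ) where
  toFun u := fun r => (1 - (r : ℝ) / N) * u (r + 1) +
      ((r : ℝ) / N) * (1 - (m : ℝ)⁻¹) * u r + ((r : ℝ) / N) * (m : ℝ)⁻¹ * u (r - 1)
  map_add' u v := by funext r; simp only [Pi.add_apply]; ring
  map_smul' c u := by funext r; simp only [Pi.smul_apply, smul_eq_mul, RingHom.id_apply]; ring

theorem wk_apply (m N : ℕ) (u : ℕ → ℝ) (r : ℕ) : wk m N u r = (1 - (r : ℝ) / N) * u (r + 1) +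
      ((r : ℝ) / N) * (1 - (m : ℝ)⁻¹) * u r + ((r : ℝ) / N) * (m : ℝ)⁻¹ * u (r - 1) := rfl

theorem wk_step_mono {m N : ℕ} (hm : 1 ≤ m) (u v : ℕ → ℝ) (r : ℕ) (hr : r ≤ N)
    (h : ∀ s ≤ r + 1, u s ≤ v s) : wk m N u r ≤ wk m N v r := by
  rw [wk_apply, wk_apply]
  have h1 : 0 ≤ 1 - (r : ℝ) / N := by
    rw [sub_nonneg]
    apply div_le_one_of_le₀ _ (by positivity)
    exact_mod_cast hr
  have h2 : 0 ≤ 1 - (m : ℝ)⁻¹ := by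
    rw [sub_nonneg]; apply inv_le_one_of_one_le₀; exact_mod_cast hm
  have a1 := h (r + 1) le_rfl
  have a2 := h r (by omega)
  have a3 := h (r - 1) (by omega)
  gcongr

theorem wk_mono {m N : ℕ} (hm : 1 ≤ m) (u v : ℕ → ℝ) (i : ℕ) : ∀ j, j + i ≤ N →
    (∀ s ≤ j + i, u s ≤ v s) → (wk m N ^ i) u j ≤ (wk m N ^ i) v j := by
  induction i with
  | zero => intro j _ h; exact h j le_rfl
  | succ i ih =>
    intro j hj h
    rw [pow_succ', Module.End.mul_apply, Module.End.mul_apply]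
    rcases Nat.eq_zero_or_pos j with rfl | hj0
    · apply wk_step_mono hm _ _ _ (by omega)
      intro s hs
      exact ih s (by omega) (fun t ht => h t (by omega))
    · apply wk_step_mono hm _ _ _ (by omega)
      intro s hs
      exact ih s (by omega) (fun t ht => h t (by omega))

theorem wk_one {m N : ℕ} : wk m N (fun _ => 1) = fun _ => 1 := by
  funext r; rw [wk_apply]; ring

theorem wk_one_pow {m N : ℕ} (i : ℕ) : (wk m N ^ i) (fun _ => 1) = fun _ => 1 := by
  induction i with
  | zero => rfl
  | succ i ih => rw [pow_succ', Module.End.mul_apply, ih, wk_one]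

theorem wk_id {m N : ℕ} (hm : 1 ≤ m) (hN : 1 ≤ N) (n : ℕ) : ∀ j, 4 * (j + n) ≤ N →
    (j : ℝ) + n / 2 ≤ (wk m N ^ n) (fun j => (j : ℝ)) j := by
  induction n with
  | zero => intro j _; simp
  | succ n ih =>
    intro j hj
    rw [pow_succ', Module.End.mul_apply]
    have h1 : wk m N (fun j => (j : ℝ) + n / 2) j ≤ wk m N ((wk m N ^ n) (fun j => (j : ℝ))) j := by
      apply wk_step_mono hm _ _ _ (by omega)
      intro s hs
      exact ih s (by omega)
    refine le_trans ?_ h1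
    rw [wk_apply]
    have hN' : (0 : ℝ) < N := by exact_mod_cast hN
    have hj' : (j : ℝ) / N ≤ 1 / 4 := by
      rw [div_le_iff₀ hN']
      have : 4 * (j : ℝ) ≤ N := by exact_mod_cast (by omega : 4 * j ≤ N)
      linarith
    have hj0 : 0 ≤ (j : ℝ) / N := by positivity
    have hm1 : (m : ℝ)⁻¹ ≤ 1 := by apply inv_le_one_of_one_le₀; exact_mod_cast hm
    have hm0 : 0 ≤ (m : ℝ)⁻¹ := by positivity
    have hp : 0 ≤ (j : ℝ) / N * (m : ℝ)⁻¹ := by positivity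
    have hp2 : (j : ℝ) / N * (m : ℝ)⁻¹ ≤ 1 / 4 := by nlinarith
    rcases Nat.eq_zero_or_pos j with rfl | h0
    · push_cast; simp; linarith
    · have : ((j - 1 : ℕ) : ℝ) = j - 1 := by push_cast [h0]; ring
      rw [this]; push_cast
      set a := (j : ℝ) / N
      have : (1 - a) * ((j : ℝ) + 1 + n / 2) + a * (1 - (m : ℝ)⁻¹) * (j + n / 2) +
        a * (m : ℝ)⁻¹ * (j - 1 + n / 2) = j + n / 2 + (1 - a - a * (m : ℝ)⁻¹) := by ring
      rw [this]
      linarith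

def gtf (k : ℕ) : ℕ → ℝ := fun j => if k < j then 1 else 0

def delf (k : ℕ) : ℕ → ℝ := fun j => if j = k then 1 else 0

theorem wk_flux {m N : ℕ} (hm : 1 ≤ m) (k j : ℕ) (hj : j ≤ N) :
    wk m N (gtf k) j ≤ (gtf k + delf k) j := by
  rw [wk_apply]
  have h1 : 0 ≤ 1 - (j : ℝ) / N := by
    rw [sub_nonneg]
    apply div_le_one_of_le₀ _ (by positivity)
    exact_mod_cast hj
  have h2 : 0 ≤ 1 - (m : ℝ)⁻¹ := by
    rw [sub_nonneg]; apply inv_le_one_of_one_le₀; exact_mod_cast hm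
  have h3 : 0 ≤ (j : ℝ) / N := by positivity
  have h4 : 0 ≤ (m : ℝ)⁻¹ := by positivity
  have h5 : 0 ≤ (j : ℝ) / N * (m : ℝ)⁻¹ := by positivity
  have b1 : ∀ s, gtf k s ≤ 1 := by intro s; unfold gtf; split_ifs <;> norm_num
  rcases lt_trichotomy j k with h | h | h
  · have e1 : gtf k (j + 1) = 0 := by simp [gtf]; omega
    have e2 : gtf k j = 0 := by simp [gtf]; omega
    have e3 : gtf k (j - 1) = 0 := by simp [gtf]; omega
    have e4 : delf k j = 0 := by simp [delf]; omega
    simp [e1, e2, e3, e4]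
  · subst h
    have e2 : gtf j j = 0 := by simp [gtf]
    have e3 : gtf j (j - 1) = 0 := by simp [gtf]
    have e1 : gtf j (j + 1) = 1 := by simp [gtf]
    have e4 : delf j j = 1 := by simp [delf]
    simp only [e1, e2, e3, e4, Pi.add_apply]
    linarith
  · have e2 : gtf k j = 1 := by simp [gtf, h]
    have e4 : delf k j = 0 := by simp [delf]; omega
    simp only [e2, e4, Pi.add_apply]
    have := b1 (j + 1)
    have := b1 (j - 1)
    calc _ ≤ (1 - (j : ℝ) / N) * 1 + ((j : ℝ) / N) * (1 - (m : ℝ)⁻¹) * 1 + ((j : ℝ) / N) * (m : ℝ)⁻¹ * 1 := by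
          gcongr
      _ = _ := by ring

theorem wk_visit {m N : ℕ} (hm : 1 ≤ m) (hN : 1 ≤ N) (k r : ℕ) (hk : k ≤ r) (hr1 : 1 ≤ r)
    (hr : 16 * r ≤ N) : 1 / 4 ≤ ∑ i ∈ range (4 * r), (wk m N ^ i) (delf k) 0 := by
  have h1 : ∀ n ≤ N, (wk m N ^ n) (gtf k) 0 ≤ ∑ i ∈ range n, (wk m N ^ i) (delf k) 0 := by
    intro n
    induction n with
    | zero => intro _; simp [gtf]
    | succ n ih =>
      intro hn
      have e := wk_mono (N := N) hm (wk m N (gtf k)) (gtf k + delf k) n 0 (by omega)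
        (fun s hs => wk_flux hm k s (by omega))
      rw [map_add, Pi.add_apply] at e
      rw [pow_succ, Module.End.mul_apply, sum_range_succ]
      have := ih (by omega)
      linarith
  refine le_trans ?_ (h1 (4 * r) (by omega))
  have h2 := wk_id hm hN (4 * r) 0 (by omega)
  have h3 : (wk m N ^ (4 * r)) ((fun j : ℕ => (j : ℝ)) - (k : ℝ) • (fun _ => (1 : ℝ))) 0 ≤
      (wk m N ^ (4 * r)) (((4 * r : ℕ) : ℝ) • gtf k) 0 := by
    apply wk_mono hm _ _ _ _ (by omega)
    intro s hs
    simp only [Pi.sub_apply, Pi.smul_apply, smul_eq_mul, mul_one, gtf]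
    split_ifs with h
    · have : (s : ℝ) ≤ ((4 * r : ℕ) : ℝ) := by exact_mod_cast (by omega : s ≤ 4 * r)
      have : (0 : ℝ) ≤ k := by positivity
      linarith
    · have : (s : ℝ) ≤ k := by exact_mod_cast (by omega : s ≤ k)
      linarith
  rw [map_sub, map_smul, map_smul, wk_one_pow] at h3
  simp only [Pi.sub_apply, Pi.smul_apply, smul_eq_mul, mul_one] at h3
  push_cast at h2 h3
  have hk' : (k : ℝ) ≤ r := by exact_mod_cast hk
  have hr' : (1 : ℝ) ≤ r := by exact_mod_cast hr1
  by_contra hc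
  push Not at hc
  nlinarith

theorem wk_avg {m N : ℕ} (hm : 1 ≤ m) (hN : 1 ≤ N) (r : ℕ) (hr1 : 1 ≤ r)
    (hr : 16 * r ≤ N) (F : ℕ → ℝ) (hF : ∀ k, 0 ≤ F k) :
    ∑ k ∈ range (r + 1), F k ≤ 4 * ∑ i ∈ range (4 * r), (wk m N ^ i) F 0 := by
  have h1 : ∀ i ∈ range (4 * r), ∑ k ∈ range (r + 1), F k * (wk m N ^ i) (delf k) 0 ≤ (wk m N ^ i) F 0 := by
    intro i hi
    rw [mem_range] at hi
    have := wk_mono (N := N) hm (∑ k ∈ range (r + 1), F k • delf k) F i 0 (by omega) (by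
      intro s _
      simp only [Finset.sum_apply, Pi.smul_apply, smul_eq_mul, delf, mul_ite, mul_one, mul_zero,
        sum_ite_eq]
      split_ifs
      · exact le_rfl
      · exact hF s)
    rw [map_sum, Finset.sum_apply] at this
    simpa [map_smul] using this
  have h2 := sum_le_sum h1
  rw [sum_comm] at h2
  simp only [← mul_sum] at h2
  have h3 : ∑ k ∈ range (r + 1), F k * (1 / 4) ≤
      ∑ k ∈ range (r + 1), F k * ∑ i ∈ range (4 * r), (wk m N ^ i) (delf k) 0 := by
    apply sum_le_sum
    intro k hk
    rw [mem_range] at hk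
    exact mul_le_mul_of_nonneg_left (wk_visit hm hN k r (by omega) hr1 hr) (hF k)
  rw [← sum_mul] at h3
  linarith

/-! ### Averages over balls -/

def Slin (m N r : ℕ) : ((Fin N → ZMod (m + 1)) → ℝ) →ₗ[ℝ] ((Fin N → ZMod (m + 1)) → ℝ) where
  toFun f := S m N r f
  map_add' u v := by
    funext x; simp only [S, Pi.add_apply, sum_add_distrib]; ring
  map_smul' c u := by
    funext x; simp only [S, Pi.smul_apply, smul_eq_mul, RingHom.id_apply, ← mul_sum]; ring

theorem Slin_apply (m N r : ℕ) (f : (Fin N → ZMod (m + 1)) → ℝ) : Slin m N r f = S m N r f := rfl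

theorem S_nonneg {m N r : ℕ} (f : (Fin N → ZMod (m + 1)) → ℝ) (hf : ∀ x, 0 ≤ f x) (x) :
    0 ≤ S m N r f x :=
  mul_nonneg (by positivity) (sum_nonneg fun y _ => hf _)

theorem S_sum {m N r : ℕ} (hm : 1 ≤ m) (hr : r ≤ N) (f : (Fin N → ZMod (m + 1)) → ℝ) :
    ∑ x, S m N r f x = ∑ x, f x := by
  simp only [S]
  rw [← mul_sum, sum_comm]
  have : ∀ y ∈ sph m N r, ∑ x, f (x - y) = ∑ x, f x := by
    intro y _
    exact Equiv.sum_comp (Equiv.subRight y) f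
  rw [sum_congr rfl this, sum_const, nsmul_eq_mul, inv_mul_cancel_left₀]
  exact_mod_cast (sph_card_pos hm r hr).ne'

theorem S_one {m N r : ℕ} (hm : 1 ≤ m) (hr : r ≤ N) :
    S m N r (fun _ => 1) = fun _ => 1 := by
  funext x
  simp only [S, sum_const, nsmul_eq_mul, mul_one]
  apply inv_mul_cancel₀
  exact_mod_cast (sph_card_pos hm r hr).ne'

theorem S_zero {m N : ℕ} (f : (Fin N → ZMod (m + 1)) → ℝ) : S m N 0 f = f := by
  funext x
  have : sph m N 0 = {0} := by
    ext y
    simp only [sph, hw, mem_filter, mem_univ, true_and, card_eq_zero, filter_eq_empty_iff,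
      mem_singleton]
    constructor
    · intro h; funext i; simpa using @h i
    · rintro rfl; simp
  simp [S, this]

theorem S_walk {m N : ℕ} (hm : 1 ≤ m) (hN : 1 ≤ N) (f : (Fin N → ZMod (m + 1)) → ℝ) (x) (i : ℕ) :
    ∀ r ≤ N, (Slin m N 1 ^ i) (S m N r f) x = (wk m N ^ i) (fun r => S m N r f x) r := by
  induction i with
  | zero => intro r _; rfl
  | succ i ih =>
    intro r hr
    rw [pow_succ, Module.End.mul_apply, pow_succ', Module.End.mul_apply]
    have e : Slin m N 1 (S m N r f) = (1 - (r : ℝ) / N) • S m N (r + 1) f +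
      ((r : ℝ) / N * (1 - (m : ℝ)⁻¹)) • S m N r f + ((r : ℝ) / N * (m : ℝ)⁻¹) • S m N (r - 1) f := by
      funext y
      exact S_three hm hN f y r hr
    rw [e, map_add, map_add, map_smul, map_smul, map_smul]
    simp only [Pi.add_apply, Pi.smul_apply, smul_eq_mul]
    rw [wk_apply, ih r hr, ih (r - 1) (by omega)]
    rcases Nat.lt_or_ge r N with h | h
    · rw [ih (r + 1) h]
    · have : r = N := by omega
      have hN' : (N : ℝ) ≠ 0 := by positivity
      rw [this, div_self hN']; simp

theorem avg_weak {m N : ℕ} (hm : 1 ≤ m) (hN : 1 ≤ N) (f : (Fin N → ZMod (m + 1)) → ℝ)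
    (hf : ∀ x, 0 ≤ f x) (lam : ℝ) (hl : 0 < lam) :
    lam * ((univ.filter (fun x => ∃ r ≤ N, lam * ((r : ℝ) + 1) < ∑ k ∈ range (r + 1), S m N k f x)).card : ℝ) ≤
      32 * ∑ x, f x := by
  classical
  have hw1 := hopf_weak (Slin m N 1) (fun u hu x => S_nonneg u hu x) (fun u => S_sum hm hN u)
    (S_one hm hN) (4 * N) f hf (lam / 16)
  set E1 := univ.filter (fun x => ∃ n ≤ 4 * N, lam / 16 * n < ∑ i ∈ range n, (Slin m N 1 ^ i) f x)
  set E2 := univ.filter (fun x => lam / 16 * ((N : ℝ) + 1) < ∑ k ∈ range (N + 1), S m N k f x) with hE2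
  have hw2 : lam / 16 * (E2.card : ℝ) ≤ ∑ x, f x := by
    have h1 : ∑ x ∈ E2, lam / 16 * ((N : ℝ) + 1) ≤ ∑ x ∈ E2, ∑ k ∈ range (N + 1), S m N k f x :=
      sum_le_sum fun x hx => (mem_filter.1 hx).2.le
    have h2 : ∑ x ∈ E2, ∑ k ∈ range (N + 1), S m N k f x ≤ ∑ x, ∑ k ∈ range (N + 1), S m N k f x :=
      sum_le_sum_of_subset_of_nonneg (subset_univ _)
        (fun x _ _ => sum_nonneg fun k _ => S_nonneg f hf x)
    rw [sum_comm (s := univ)] at h2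
    have h3 : ∑ k ∈ range (N + 1), ∑ x, S m N k f x = ((N : ℝ) + 1) * ∑ x, f x := by
      rw [sum_congr rfl (fun k hk => S_sum hm (by rw [mem_range] at hk; omega) f), sum_const,
        card_range, nsmul_eq_mul]
      push_cast; rfl
    rw [h3] at h2
    rw [sum_const, nsmul_eq_mul] at h1
    have h4 : (0 : ℝ) < (N : ℝ) + 1 := by positivity
    refine le_of_mul_le_mul_left ?_ h4
    linarith
  have hsub : (univ.filter (fun x => ∃ r ≤ N, lam * ((r : ℝ) + 1) < ∑ k ∈ range (r + 1), S m N k f x)) ⊆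
      E1 ∪ E2 := by
    intro x hx
    obtain ⟨r, hr, h⟩ := (mem_filter.1 hx).2
    rw [mem_union]
    rcases Nat.eq_zero_or_pos r with rfl | hr0
    · left
      refine mem_filter.2 ⟨mem_univ _, 1, by omega, ?_⟩
      simp only [zero_add, sum_range_one, S_zero] at h
      simp at h ⊢
      linarith
    · rcases Nat.lt_or_ge N (16 * r) with h16 | h16
      · right
        refine mem_filter.2 ⟨mem_univ _, ?_⟩
        have h1 : ∑ k ∈ range (r + 1), S m N k f x ≤ ∑ k ∈ range (N + 1), S m N k f x := by
          apply sum_le_sum_of_subset_of_nonneg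
          · intro k; simp only [mem_range]; omega
          · intro k _ _; exact S_nonneg f hf x
        have h2 : (N : ℝ) + 1 ≤ 16 * ((r : ℝ) + 1) := by
          exact_mod_cast (by omega : N + 1 ≤ 16 * (r + 1))
        nlinarith
      · left
        refine mem_filter.2 ⟨mem_univ _, 4 * r, by omega, ?_⟩
        have h1 := wk_avg hm hN r hr0 h16 (fun k => S m N k f x) (fun k => S_nonneg f hf x)
        have h2 : ∀ i, (wk m N ^ i) (fun k => S m N k f x) 0 = (Slin m N 1 ^ i) f x := by
          intro i
          rw [← S_walk hm hN f x i 0 (by omega), S_zero]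
        simp only [h2] at h1
        push_cast
        nlinarith
  have h5 : ((univ.filter (fun x => ∃ r ≤ N, lam * ((r : ℝ) + 1) < ∑ k ∈ range (r + 1), S m N k f x)).card : ℝ) ≤
      E1.card + E2.card := by
    exact_mod_cast (card_le_card hsub).trans (card_union_le _ _)
  nlinarith

/-! ### Pointwise bound -/

theorem dl_rev (F : ℕ → ℝ) (r M : ℕ) : ∀ t, t + M ≤ r →
    dl^[M] (fun t => F (r - t)) t = (-1) ^ M * dl^[M] F (r - t - M) := by
  induction M with
  | zero => intro t _; simp
  | succ M ih =>
    intro t ht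
    rw [Function.iterate_succ_apply', Function.iterate_succ_apply']
    simp only [dl]
    rw [ih (t + 1) (by omega), ih t (by omega)]
    rw [show r - (t + 1) - M = r - t - (M + 1) by omega,
      show r - t - (M + 1) + 1 = r - t - M by omega]
    ring

theorem pointwise (P : ℕ) (F : ℕ → ℝ) (hF : ∀ k, 0 ≤ F k) (N r : ℕ) (hr : r ≤ N)
    (ε : ℝ) (he : 0 < ε) (he1 : ε ≤ 1) (α γ : ℝ) (hα : 0 ≤ α) (hγ : 0 ≤ γ)
    (h1 : ∑ k ∈ range (r + 1), F k ≤ α * ((r : ℝ) + 1))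
    (h2 : ∑ s ∈ range (N + 1 - (P + 1)), ((s : ℝ) + 1) ^ (2 * (P + 1) - 1) * (dl^[P + 1] F s) ^ 2 ≤ γ ^ 2) :
    F r ≤ (2 ^ (P + 4) * ((P : ℝ) + 1)) * (α / ε) + 2 ^ (P + 1) * (ε ^ P * γ) := by
  have hpw : (16 : ℝ) ≤ 2 ^ (P + 4) := by
    have : (1 : ℝ) ≤ 2 ^ P := one_le_pow₀ (by norm_num)
    rw [pow_add]; linarith
  have hP0 : (0 : ℝ) ≤ P := Nat.cast_nonneg _
  by_cases hc : ε * r < 2 * ((P : ℝ) + 1)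
  · have a1 : F r ≤ α * ((r : ℝ) + 1) :=
      (single_le_sum (fun k _ => hF k) (by simp : r ∈ range (r + 1))).trans h1
    have a2 : α * ((r : ℝ) + 1) ≤ (2 ^ (P + 4) * ((P : ℝ) + 1)) * (α / ε) := by
      rw [← mul_div_assoc, le_div_iff₀ he]
      have : ((r : ℝ) + 1) * ε ≤ 2 ^ (P + 4) * ((P : ℝ) + 1) := by nlinarith
      nlinarith
    have a3 : 0 ≤ 2 ^ (P + 1) * (ε ^ P * γ) := by positivity
    linarith
  · push Not at hc
    set M := P + 1 with hM
    have hMr : (M : ℝ) = P + 1 := by rw [hM]; push_cast; ring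
    have hM0 : (0 : ℝ) < M := by rw [hMr]; positivity
    set h := ⌊ε * r / (2 * M)⌋₊ with hh
    have b1 : 1 ≤ h := by
      rw [hh, Nat.one_le_floor_iff, le_div_iff₀ (by positivity), hMr]; linarith
    have b2 : (h : ℝ) ≤ ε * r / (2 * M) := Nat.floor_le (by positivity)
    have b3 : ε * r / (2 * M) < h + 1 := Nat.lt_floor_add_one _
    have b1r : (1 : ℝ) ≤ h := by exact_mod_cast b1
    rw [le_div_iff₀ (by positivity)] at b2
    rw [div_lt_iff₀ (by positivity)] at b3
    have hr0 : (0 : ℝ) ≤ r := Nat.cast_nonneg _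
    have er : ε * r ≤ r := by nlinarith
    have hrpos : (0 : ℝ) < r := by nlinarith
    have b4 : 2 * (M * h) ≤ r := by
      have : (2 : ℝ) * (M * h) ≤ r := by nlinarith
      exact_mod_cast this
    have b5 : ∀ t ∈ range (M * (h - 1) + 1), 2 * (t + M) ≤ r := by
      intro t ht
      rw [mem_range] at ht
      have : M * h = M * (h - 1) + M := by
        obtain ⟨k, hk⟩ : ∃ k, h = k + 1 := ⟨h - 1, by omega⟩
        rw [hk]; simp [mul_add]
      omega
    have hWcard : (M * (h - 1) + 1) ≤ r := by
      have := b5 (M * (h - 1)) (by simp)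
      omega
    have g := gn0 h b1 P (fun t => F (r - t)) 0
    simp only [zero_add, Nat.sub_zero] at g
    rw [← hM] at g
    rw [abs_of_nonneg (hF r)] at g
    have c1 : ∑ s ∈ range (M * (h - 1) + 1), |F (r - s)| ≤ α * (r + 1) := by
      calc _ = ∑ s ∈ range (M * (h - 1) + 1), F (r - s) :=
            sum_congr rfl fun s _ => abs_of_nonneg (hF _)
        _ ≤ ∑ s ∈ range (r + 1), F (r - s) := by
            apply sum_le_sum_of_subset_of_nonneg
            · apply range_subset_range.2; omega
            · intro _ _ _; exact hF _
        _ = ∑ s ∈ range (r + 1), F s := by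
            rw [← sum_range_reflect]
            apply sum_congr rfl; intro s hs; rw [mem_range] at hs; congr 1; omega
        _ ≤ _ := h1
    have c2 : ∑ s ∈ range (M * (h - 1) + 1), |dl^[M] (fun t => F (r - t)) s| =
        ∑ s ∈ range (M * (h - 1) + 1), |dl^[M] F (r - s - M)| := by
      apply sum_congr rfl
      intro s hs
      rw [dl_rev F r M s (by have := b5 s hs; omega), abs_mul, abs_pow]; simp
    have c3 : ∑ s ∈ range (M * (h - 1) + 1), (dl^[M] F (r - s - M)) ^ 2 ≤ (2 / r) ^ (2 * P + 1) * γ ^ 2 := by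
      calc _ ≤ ∑ s ∈ range (M * (h - 1) + 1), (2 / (r : ℝ)) ^ (2 * P + 1) *
            ((((r - s - M : ℕ) : ℝ) + 1) ^ (2 * M - 1) * (dl^[M] F (r - s - M)) ^ 2) := by
            apply sum_le_sum
            intro s hs
            have := b5 s hs
            rw [show 2 * M - 1 = 2 * P + 1 by omega, ← mul_assoc, ← mul_pow]
            have w : (1 : ℝ) ≤ 2 / r * (((r - s - M : ℕ) : ℝ) + 1) := by
              rw [div_mul_eq_mul_div, le_div_iff₀ hrpos]
              have : r ≤ 2 * (r - s - M + 1) := by omega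
              have : (r : ℝ) ≤ 2 * (((r - s - M : ℕ) : ℝ) + 1) := by exact_mod_cast this
              linarith
            have := one_le_pow₀ w (n := 2 * P + 1)
            nlinarith [sq_nonneg (dl^[M] F (r - s - M))]
        _ = (2 / (r : ℝ)) ^ (2 * P + 1) * ∑ s ∈ range (M * (h - 1) + 1),
            ((((r - s - M : ℕ) : ℝ) + 1) ^ (2 * M - 1) * (dl^[M] F (r - s - M)) ^ 2) := by rw [mul_sum]
        _ ≤ _ := by
            apply mul_le_mul_of_nonneg_left _ (by positivity)
            refine le_trans ?_ h2
            rw [← sum_image (f := fun s : ℕ => ((s : ℝ) + 1) ^ (2 * M - 1) * (dl^[M] F s) ^ 2)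
              (g := fun s => r - s - M)]
            · apply sum_le_sum_of_subset_of_nonneg
              · intro s hs
                rw [mem_image] at hs
                obtain ⟨t, ht, rfl⟩ := hs
                have := b5 t ht
                rw [mem_range]; omega
              · intro _ _ _; positivity
            · intro s hs t ht hst
              have := b5 s hs
              have := b5 t ht
              simp only at hst
              omega
    have c4 : ∑ s ∈ range (M * (h - 1) + 1), |dl^[M] F (r - s - M)| ≤ 2 ^ M * γ / r ^ P := by
      apply le_of_sq_le_sq _ (by positivity)
      refine (sq_sum_le_card_mul_sum_sq).trans ?_
      simp only [sq_abs, card_range]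
      calc _ ≤ (r : ℝ) * ((2 / r) ^ (2 * P + 1) * γ ^ 2) := by
            apply mul_le_mul _ c3 (sum_nonneg fun _ _ => sq_nonneg _) hr0
            exact_mod_cast hWcard
        _ = 2 ^ (2 * P + 1) * γ ^ 2 / (r ^ P) ^ 2 := by
            rw [div_pow, ← pow_mul, show P * 2 = 2 * P by ring, pow_succ (r : ℝ)]; field_simp
        _ ≤ 2 ^ (2 * P + 2) * γ ^ 2 / (r ^ P) ^ 2 := by
            gcongr
            · norm_num
            · omega
        _ = _ := by rw [hM, div_pow, mul_pow, show (2 : ℝ) ^ (2 * P + 2) = (2 ^ (P + 1)) ^ 2 by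
              rw [← pow_mul]; congr 1; ring]
    rw [c2] at g
    refine g.trans (add_le_add ?_ ?_)
    · calc (2 : ℝ) ^ M / h * _ ≤ 2 ^ M / h * (α * (r + 1)) := by gcongr
        _ ≤ _ := by
          rw [← hMr, div_mul_eq_mul_div, ← mul_div_assoc, div_le_div_iff₀ (by positivity) he]
          have e1 : (r + 1) * ε ≤ 8 * M * h := by
            have hr1 : (1 : ℝ) ≤ r := by
              have : 0 < r := by exact_mod_cast hrpos
              exact_mod_cast this
            nlinarith
          have e2 : (2 : ℝ) ^ (P + 4) = 2 ^ M * 8 := by rw [hM, pow_add, pow_add]; norm_num; ring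
          rw [e2]
          have : 0 ≤ (2 : ℝ) ^ M * α := by positivity
          nlinarith
    · calc (h : ℝ) ^ P * _ ≤ (ε * r) ^ P * (2 ^ M * γ / r ^ P) := by
            apply mul_le_mul _ c4 (sum_nonneg fun _ _ => abs_nonneg _) (by positivity)
            apply pow_le_pow_left₀ (by positivity)
            have : (1 : ℝ) ≤ M := by rw [hMr]; linarith
            nlinarith
        _ = _ := by rw [mul_pow]; field_simp

/-! ### Weak restricted type bound -/

theorem weakres (P : ℕ) : ∃ C : ℝ, 0 < C ∧ ∀ m : ℕ, 2 ≤ m → ∀ N : ℕ, 1 ≤ N →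
    ∀ (g : (Fin N → ZMod (m + 1)) → ℝ) (E : Finset (Fin N → ZMod (m + 1))) (B τ w : ℝ),
      (∀ x, 0 ≤ g x) → (∀ x, g x ≤ B) → (∀ x, x ∉ E → g x = 0) → 0 < τ → 0 < B → 1 ≤ w →
      B ≤ τ * w ^ (2 * P) →
      τ * ((univ.filter (fun x => ∃ r ≤ N, τ < S m N r g x)).card : ℝ) ≤ C * ((E.card : ℝ) * (B * w)) := by
  classical
  obtain ⟨C0, hC0, H0⟩ := l2bound (P + 1) (by omega)
  set K1 : ℝ := 2 ^ (P + 4) * ((P : ℝ) + 1) with hK1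
  set K2 : ℝ := 2 ^ (P + 1) with hK2
  have hK1p : 0 < K1 := by positivity
  have hK2p : 0 < K2 := by positivity
  refine ⟨64 * K1 + 4 * K2 ^ 2 * C0, by positivity, ?_⟩
  intro m hm N hN g E B τ w hg hgB hgE hτ hB hw hBw
  have hw0 : 0 < w := by linarith
  set α := τ / (2 * K1 * w) with hα
  have hα0 : 0 < α := by positivity
  set γ := τ * w ^ P / (2 * K2) with hγ
  have hγ0 : 0 < γ := by positivity
  set Gs : (Fin N → ZMod (m + 1)) → ℝ := fun x => ∑ s ∈ range (N + 1 - (P + 1)),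
    ((s : ℝ) + 1) ^ (2 * (P + 1) - 1) * (dl^[P + 1] (fun r => S m N r g x) s) ^ 2 with hGs
  have hGs0 : ∀ x, 0 ≤ Gs x := fun x => sum_nonneg fun _ _ => by positivity
  have hE1 : ∑ x, g x ≤ E.card * B := by
    rw [← sum_subset (subset_univ E) (fun x _ hx => hgE x hx), ← nsmul_eq_mul]
    exact sum_le_card_nsmul _ _ _ fun x _ => hgB x
  have hE2 : ∑ x, g x ^ 2 ≤ E.card * B ^ 2 := by
    rw [← sum_subset (subset_univ E) (fun x _ hx => by rw [hgE x hx]; norm_num), ← nsmul_eq_mul]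
    exact sum_le_card_nsmul _ _ _ fun x _ => pow_le_pow_left₀ (hg x) (hgB x) 2
  have hG : ∑ x, Gs x ≤ C0 * ∑ x, g x ^ 2 := by
    by_cases hc : P + 1 ≤ N + 1
    · exact H0 m hm N (N + 1 - (P + 1)) (by omega) g
    · have : N + 1 - (P + 1) = 0 := by omega
      simp only [hGs, this, range_zero, sum_empty, sum_const_zero]
      exact mul_nonneg hC0.le (sum_nonneg fun _ _ => sq_nonneg _)
  set F1 := univ.filter (fun x => ∃ r ≤ N, α * ((r : ℝ) + 1) < ∑ k ∈ range (r + 1), S m N k g x) with hF1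
  set F2 := univ.filter (fun x => γ ^ 2 < Gs x) with hF2
  have d1 : α * (F1.card : ℝ) ≤ 32 * ∑ x, g x := avg_weak (by omega) hN g hg α hα0
  have d2 : γ ^ 2 * (F2.card : ℝ) ≤ ∑ x, Gs x := by
    calc _ = ∑ x ∈ F2, γ ^ 2 := by rw [sum_const, nsmul_eq_mul]; ring
      _ ≤ ∑ x ∈ F2, Gs x := sum_le_sum fun x hx => (mem_filter.1 hx).2.le
      _ ≤ _ := sum_le_sum_of_subset_of_nonneg (subset_univ _) fun x _ _ => hGs0 x
  have hsub : (univ.filter (fun x => ∃ r ≤ N, τ < S m N r g x)) ⊆ F1 ∪ F2 := by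
    intro x hx
    rw [mem_filter] at hx
    obtain ⟨-, r, hr, hx⟩ := hx
    by_contra hn
    simp only [mem_union, hF1, hF2, mem_filter, mem_univ, true_and, not_or, not_exists, not_and, not_lt] at hn
    have := pointwise P (fun k => S m N k g x) (fun k => S_nonneg g hg x) N r hr (w⁻¹) (by positivity)
      (inv_le_one_of_one_le₀ hw) α γ hα0.le hγ0.le (hn.1 r hr) hn.2
    rw [← hK1, ← hK2] at this
    have e1 : K1 * (α / w⁻¹) = τ / 2 := by rw [hα]; field_simp
    have e2 : K2 * (w⁻¹ ^ P * γ) = τ / 2 := by rw [hγ, inv_pow]; field_simp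
    linarith
  have hcard : ((univ.filter (fun x => ∃ r ≤ N, τ < S m N r g x)).card : ℝ) ≤ F1.card + F2.card := by
    exact_mod_cast (card_le_card hsub).trans (card_union_le _ _)
  have f1 : τ * (F1.card : ℝ) ≤ 64 * K1 * (E.card * (B * w)) := by
    have : α * (F1.card : ℝ) * (2 * K1 * w) = τ * F1.card := by rw [hα]; field_simp
    rw [← this]
    have := mul_le_mul_of_nonneg_right (d1.trans (mul_le_mul_of_nonneg_left hE1 (by norm_num)))
      (by positivity : 0 ≤ 2 * K1 * w)
    linarith
  have f2 : τ * (F2.card : ℝ) ≤ 4 * K2 ^ 2 * C0 * (E.card * (B * w)) := by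
    have a1 : γ ^ 2 * (F2.card : ℝ) ≤ C0 * (E.card * B ^ 2) :=
      d2.trans (hG.trans (mul_le_mul_of_nonneg_left hE2 hC0.le))
    have a2 : τ * B ≤ γ ^ 2 * (4 * K2 ^ 2) := by
      have : γ ^ 2 * (4 * K2 ^ 2) = τ * (τ * w ^ (2 * P)) := by
        rw [hγ, div_pow, mul_pow, mul_pow, ← pow_mul, mul_comm P 2]; field_simp; norm_num
      rw [this]; exact mul_le_mul_of_nonneg_left hBw hτ.le
    have hc0 : (0 : ℝ) ≤ F2.card := Nat.cast_nonneg _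
    have he0 : (0 : ℝ) ≤ E.card := Nat.cast_nonneg _
    have a3 : B * (τ * F2.card) ≤ B * (4 * K2 ^ 2 * C0 * (E.card * B)) := by
      calc B * (τ * F2.card) = (τ * B) * F2.card := by ring
        _ ≤ γ ^ 2 * (4 * K2 ^ 2) * F2.card := mul_le_mul_of_nonneg_right a2 hc0
        _ = 4 * K2 ^ 2 * (γ ^ 2 * F2.card) := by ring
        _ ≤ 4 * K2 ^ 2 * (C0 * (E.card * B ^ 2)) := mul_le_mul_of_nonneg_left a1 (by positivity)
        _ = _ := by ring
    refine (le_of_mul_le_mul_left a3 hB).trans ?_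
    apply mul_le_mul_of_nonneg_left _ (by positivity)
    apply mul_le_mul_of_nonneg_left _ he0
    nlinarith
  calc _ ≤ τ * ((F1.card : ℝ) + F2.card) := mul_le_mul_of_nonneg_left hcard hτ.le
    _ ≤ _ := by linarith

/-! ### Level sets -/

theorem S_mono_sum {m N r : ℕ} (f : (Fin N → ZMod (m + 1)) → ℝ) (g0 : (Fin N → ZMod (m + 1)) → ℝ) (L : ℕ)
    (g : ℕ → (Fin N → ZMod (m + 1)) → ℝ) (h : ∀ x, f x ≤ g0 x + ∑ l ∈ range L, g l x) (x) :
    S m N r f x ≤ S m N r g0 x + ∑ l ∈ range L, S m N r (g l) x := by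
  simp only [S]
  rw [← mul_sum, ← mul_add]
  apply mul_le_mul_of_nonneg_left _ (by positivity)
  rw [sum_comm, ← sum_add_distrib]
  exact sum_le_sum fun y _ => h _

theorem S_le_const {m N r : ℕ} (hm : 1 ≤ m) (hr : r ≤ N) (f : (Fin N → ZMod (m + 1)) → ℝ) (c : ℝ)
    (h : ∀ x, f x ≤ c) (x) : S m N r f x ≤ c := by
  simp only [S]
  have hc : (0 : ℝ) < (sph m N r).card := by exact_mod_cast sph_card_pos hm r hr
  rw [inv_mul_le_iff₀ hc, ← nsmul_eq_mul]
  exact sum_le_card_nsmul _ _ _ fun y _ => h _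

theorem weaklevel (p : ℝ) (hp : 1 < p) : ∃ C b : ℝ, 0 < C ∧ 0 < b ∧ b < 2 ^ p ∧ ∀ m : ℕ, 2 ≤ m → ∀ N : ℕ, 1 ≤ N →
    ∀ (f : (Fin N → ZMod (m + 1)) → ℝ), (∀ x, 0 ≤ f x) → ∀ lam : ℝ, 0 < lam → ∃ L : ℕ,
      ((univ.filter (fun x => ∃ r ≤ N, lam < S m N r f x)).card : ℝ) ≤
        C * ∑ l ∈ range L, b ^ l * ((univ.filter (fun x => 2 ^ l * lam < 2 * f x)).card : ℝ) := by
  classical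
  obtain ⟨q, hq1, hqp⟩ : ∃ q : ℝ, 1 < q ∧ q * q < p := by
    refine ⟨p ^ (1 / 3 : ℝ), Real.one_lt_rpow hp (by norm_num), ?_⟩
    rw [← Real.rpow_add (by linarith)]
    conv_rhs => rw [← Real.rpow_one p]
    exact Real.rpow_lt_rpow_of_exponent_lt hp (by norm_num)
  set δ := q - 1 with hδ
  have hδ0 : 0 < δ := by rw [hδ]; linarith
  obtain ⟨P, hP⟩ := exists_nat_ge (1 / δ)
  have hP' : 1 ≤ δ * (2 * P : ℕ) := by
    rw [div_le_iff₀ hδ0] at hP; push_cast; nlinarith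
  obtain ⟨C0, hC0, H0⟩ := weakres P
  set a : ℝ := 2 ^ (-δ) with ha
  have ha0 : 0 < a := by positivity
  have ha1 : a < 1 := Real.rpow_lt_one_of_one_lt_of_neg (by norm_num) (by linarith)
  set c : ℝ := (1 - a) / 2 with hc
  have hc0 : 0 < c := by rw [hc]; linarith
  have hc1 : c ≤ 1 := by rw [hc]; linarith
  have h2a : (2 : ℝ) / a = 2 ^ q := by
    rw [ha, Real.rpow_neg (by norm_num), div_inv_eq_mul]
    conv_lhs => rw [← Real.rpow_one 2, ← Real.rpow_mul (by norm_num), ← Real.rpow_add (by norm_num)]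
    congr 1; rw [hδ]; ring
  refine ⟨C0 * (c⁻¹) ^ q, (2 ^ q) ^ q, by positivity, by positivity, ?_, ?_⟩
  · rw [← Real.rpow_mul (by norm_num)]
    exact Real.rpow_lt_rpow_of_exponent_lt (by norm_num) hqp
  intro m hm N hN f hf lam hlam
  obtain ⟨R, hR⟩ : ∃ R : ℝ, ∀ x, f x ≤ R := by
    refine ⟨∑ x, f x, fun x => single_le_sum (fun y _ => hf y) (mem_univ x)⟩
  obtain ⟨L, hL⟩ := pow_unbounded_of_one_lt (2 * R / lam) (by norm_num : (1 : ℝ) < 2)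
  rw [div_lt_iff₀ hlam] at hL
  refine ⟨L, ?_⟩
  set E : ℕ → Finset (Fin N → ZMod (m + 1)) := fun l => univ.filter (fun x => 2 ^ l * lam < 2 * f x) with hE
  set g : ℕ → (Fin N → ZMod (m + 1)) → ℝ := fun l x =>
    if 2 ^ l * lam < 2 * f x ∧ f x ≤ 2 ^ l * lam then f x else 0 with hg
  set g0 : (Fin N → ZMod (m + 1)) → ℝ := fun x => if 2 * f x ≤ lam then f x else 0 with hg0
  have hg_nonneg : ∀ l x, 0 ≤ g l x := by
    intro l x; simp only [hg]; split_ifs; exacts [hf x, le_rfl]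
  have hdecomp : ∀ x, f x ≤ g0 x + ∑ l ∈ range L, g l x := by
    intro x
    by_cases h0 : 2 * f x ≤ lam
    · have : g0 x = f x := by simp only [hg0]; rw [if_pos h0]
      rw [this]
      linarith [sum_nonneg (fun l (_ : l ∈ range L) => hg_nonneg l x)]
    · have h0' : g0 x = 0 := by simp only [hg0]; rw [if_neg h0]
      have hex : ∃ l, 2 * f x ≤ 2 ^ l * lam := ⟨L, by linarith [hR x]⟩
      have hs := Nat.find_spec hex
      have hle : Nat.find hex ≤ L := Nat.find_min' hex (by linarith [hR x])
      have hmin := fun k => @Nat.find_min _ _ hex k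
      set n := Nat.find hex
      obtain _ | l := n
      · simp at hs; exact absurd hs h0
      have hl := hmin l (by omega)
      have : g l x = f x := by
        rw [pow_succ] at hs
        simp only [hg]; rw [if_pos ⟨by linarith, by linarith⟩]
      rw [h0', zero_add, ← this]
      exact single_le_sum (f := fun l => g l x) (fun l _ => hg_nonneg l x) (mem_range.2 (by omega))
  have hgeo : ∑ l ∈ range L, c * a ^ l * lam ≤ lam / 2 := by
    rw [← sum_mul, ← mul_sum]
    have : ∑ l ∈ range L, a ^ l ≤ 1 / (1 - a) := by
      rw [geom_sum_eq ha1.ne, ← neg_div_neg_eq, neg_sub, neg_sub]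
      have := pow_pos ha0 L
      apply div_le_div_of_nonneg_right _ (by linarith)
      linarith
    have : c * ∑ l ∈ range L, a ^ l ≤ 1 / 2 := by
      calc _ ≤ c * (1 / (1 - a)) := mul_le_mul_of_nonneg_left this hc0.le
        _ = 1 / 2 := by rw [hc]; have : 1 - a ≠ 0 := by linarith
                        field_simp
    nlinarith
  have hsub : (univ.filter (fun x => ∃ r ≤ N, lam < S m N r f x)) ⊆
      (range L).biUnion fun l => univ.filter (fun x => ∃ r ≤ N, c * a ^ l * lam < S m N r (g l) x) := by
    intro x hx
    rw [mem_filter] at hx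
    obtain ⟨-, r, hr, hx⟩ := hx
    by_contra hn
    simp only [mem_biUnion, mem_range, mem_filter, mem_univ, true_and, not_exists, not_and, not_lt] at hn
    have e1 := S_mono_sum (r := r) f g0 L g hdecomp x
    have e2 : S m N r g0 x ≤ lam / 2 := S_le_const (by omega) hr g0 _ (by
      intro y; simp only [hg0]; split_ifs <;> linarith) x
    have e3 : ∑ l ∈ range L, S m N r (g l) x ≤ ∑ l ∈ range L, c * a ^ l * lam :=
      sum_le_sum fun l hl => hn l (mem_range.1 hl) r hr
    linarith
  have hterm : ∀ l, ((univ.filter (fun x => ∃ r ≤ N, c * a ^ l * lam < S m N r (g l) x)).card : ℝ) ≤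
      C0 * (c⁻¹) ^ q * (((2 ^ q) ^ q) ^ l * ((E l).card : ℝ)) := by
    intro l
    set τ := c * a ^ l * lam with hτ
    have hτ0 : 0 < τ := by positivity
    set u : ℝ := c⁻¹ * (2 ^ q) ^ l with hu
    have hu1 : 1 ≤ u := by
      rw [hu]
      have : (1 : ℝ) ≤ (2 ^ q) ^ l := one_le_pow₀ (Real.one_le_rpow (by norm_num) (by linarith))
      have : 1 ≤ c⁻¹ := (one_le_inv₀ hc0).2 hc1
      nlinarith
    have hu0 : 0 < u := by linarith
    have hBu : 2 ^ l * lam = τ * u := by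
      rw [hτ, hu, ← h2a, div_pow]; field_simp
    have := H0 m hm N hN (g l) (E l) (2 ^ l * lam) τ (u ^ δ) (hg_nonneg l)
      (by intro x; simp only [hg]; split_ifs with h; exacts [h.2, by positivity])
      (by intro x hx
          simp only [hg]; rw [if_neg]
          rintro ⟨h1, -⟩; exact hx (by simp only [hE, mem_filter, mem_univ, true_and]; exact h1))
      hτ0 (by positivity) (Real.one_le_rpow hu1 hδ0.le)
      (by rw [hBu]
          apply mul_le_mul_of_nonneg_left _ hτ0.le
          rw [← Real.rpow_natCast, ← Real.rpow_mul hu0.le]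
          conv_lhs => rw [← Real.rpow_one u]
          exact Real.rpow_le_rpow_of_exponent_le hu1 hP')
    rw [hBu] at this
    have e : u * u ^ δ = (c⁻¹) ^ q * ((2 ^ q) ^ q) ^ l := by
      have : u * u ^ δ = u ^ q := by
        conv_lhs => rw [← Real.rpow_one u]
        rw [Real.rpow_one, ← Real.rpow_one_add' hu0.le (by linarith)]
        congr 1; rw [hδ]; ring
      rw [this, hu, Real.mul_rpow (by positivity) (by positivity),
        Real.rpow_pow_comm (x := (2 : ℝ) ^ q) (by positivity) q l]
    apply le_of_mul_le_mul_left _ hτ0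
    refine this.trans (le_of_eq ?_)
    calc _ = τ * (C0 * (((E l).card : ℝ) * (u * u ^ δ))) := by ring
      _ = _ := by rw [e]; ring
  calc _ ≤ (((range L).biUnion fun l => univ.filter (fun x => ∃ r ≤ N, c * a ^ l * lam < S m N r (g l) x)).card : ℝ) := by
        exact_mod_cast card_le_card hsub
    _ ≤ ∑ l ∈ range L, ((univ.filter (fun x => ∃ r ≤ N, c * a ^ l * lam < S m N r (g l) x)).card : ℝ) := by
        exact_mod_cast card_biUnion_le
    _ ≤ ∑ l ∈ range L, C0 * (c⁻¹) ^ q * (((2 ^ q) ^ q) ^ l * ((E l).card : ℝ)) := sum_le_sum fun l _ => hterm l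
    _ = _ := by rw [mul_sum]

/-! ### Layer cake -/

open MeasureTheory in
theorem layer {α : Type*} [Fintype α] (F f : α → ℝ) (hF : ∀ x, 0 ≤ F x) (hf : ∀ x, 0 ≤ f x)
    (p C b : ℝ) (hp : 1 < p) (hC : 0 < C) (hb : 0 < b) (hbp : b < 2 ^ p)
    (h : ∀ lam : ℝ, 0 < lam → ∃ L : ℕ, ((univ.filter (fun x => lam < F x)).card : ℝ) ≤
        C * ∑ l ∈ range L, b ^ l * ((univ.filter (fun x => 2 ^ l * lam < 2 * f x)).card : ℝ)) :
    ∑ x, F x ^ p ≤ (C * 2 ^ p * (1 - b / 2 ^ p)⁻¹) * ∑ x, f x ^ p := by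
  classical
  let _ : MeasurableSpace α := ⊤
  have hp0 : 0 < p := by linarith
  have hms : ∀ s : Set α, MeasurableSet s := fun s => trivial
  have hmf : ∀ g : α → ℝ, AEMeasurable g (Measure.count : Measure α) := fun g =>
    (measurable_from_top : Measurable g).aemeasurable
  have hsum : ∀ g : α → ℝ, (∀ x, 0 ≤ g x) → ∫⁻ x, ENNReal.ofReal (g x ^ p) ∂(Measure.count : Measure α) =
      ENNReal.ofReal (∑ x, g x ^ p) := by
    intro g hg
    have : MeasurableSingletonClass α := ⟨fun _ => trivial⟩
    rw [lintegral_fintype, ENNReal.ofReal_sum_of_nonneg (fun x _ => Real.rpow_nonneg (hg x) p)]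
    simp
  have hcnt : ∀ (g : α → ℝ) (t : ℝ), (Measure.count : Measure α) {a | t < g a} =
      ENNReal.ofReal ((univ.filter (fun x => t < g x)).card : ℝ) := by
    intro g t
    have : {a | t < g a} = ((univ.filter (fun x => t < g x) : Finset α) : Set α) := by ext; simp
    rw [this, Measure.count_apply_finset' (hms _)]
    simp
  set G : ℕ → α → ℝ := fun l x => 2 * f x / 2 ^ l with hG
  have hG0 : ∀ l x, 0 ≤ G l x := fun l x => by have := hf x; simp only [hG]; positivity
  have hpt : ∀ t : ℝ, 0 < t → (Measure.count : Measure α) {a | t < F a} ≤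
      ∑' l : ℕ, ENNReal.ofReal (C * b ^ l) * (Measure.count : Measure α) {a | t < G l a} := by
    intro t ht
    obtain ⟨L, hL⟩ := h t ht
    refine le_trans ?_ (ENNReal.sum_le_tsum (range L))
    rw [hcnt]
    refine (ENNReal.ofReal_le_ofReal hL).trans (le_of_eq ?_)
    rw [mul_sum, ENNReal.ofReal_sum_of_nonneg (fun l _ => by positivity)]
    apply sum_congr rfl
    intro l _
    rw [hcnt, ← ENNReal.ofReal_mul (by positivity), mul_assoc]
    congr 5
    ext x
    simp only [hG, mem_filter, mem_univ, true_and]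
    rw [lt_div_iff₀ (by positivity), mul_comm]
  have hmeas : ∀ g : α → ℝ, Measurable fun t : ℝ => (Measure.count : Measure α) {a | t < g a} := by
    intro g
    apply Antitone.measurable
    intro s t hst
    exact measure_mono fun a (ha : t < g a) => lt_of_le_of_lt hst ha
  have hmain : ENNReal.ofReal (∑ x, F x ^ p) ≤
      ∑' l : ℕ, ENNReal.ofReal (C * b ^ l) * ENNReal.ofReal (∑ x, G l x ^ p) := by
    rw [← hsum F hF, lintegral_rpow_eq_lintegral_meas_lt_mul _ (Filter.Eventually.of_forall hF) (hmf F) hp0]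
    have e : ∀ l, ENNReal.ofReal (∑ x, G l x ^ p) = ENNReal.ofReal p *
        ∫⁻ t in Set.Ioi 0, (Measure.count : Measure α) {a | t < G l a} * ENNReal.ofReal (t ^ (p - 1)) := by
      intro l
      rw [← hsum (G l) (hG0 l), lintegral_rpow_eq_lintegral_meas_lt_mul _
        (Filter.Eventually.of_forall (hG0 l)) (hmf _) hp0]
    simp_rw [e]
    have hm2 : Measurable fun t : ℝ => ENNReal.ofReal (t ^ (p - 1)) := by fun_prop
    have hm3 : ∀ l, Measurable fun t : ℝ => (Measure.count : Measure α) {a | t < G l a} *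
        ENNReal.ofReal (t ^ (p - 1)) := fun l => (hmeas (G l)).mul hm2
    calc _ ≤ ENNReal.ofReal p * ∫⁻ t in Set.Ioi 0, ∑' l : ℕ, ENNReal.ofReal (C * b ^ l) *
            ((Measure.count : Measure α) {a | t < G l a} * ENNReal.ofReal (t ^ (p - 1))) := by
          refine mul_le_mul_right ?_ _
          apply setLIntegral_mono' measurableSet_Ioi
          intro t ht
          simp_rw [← mul_assoc]
          rw [ENNReal.tsum_mul_right]
          gcongr
          exact hpt t ht
      _ = _ := by
          rw [lintegral_tsum (fun l => ((hm3 l).const_mul _).aemeasurable), ← ENNReal.tsum_mul_left]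
          congr 1; funext l
          rw [lintegral_const_mul _ (hm3 l)]
          ring
  have hGp : ∀ l, ∑ x, G l x ^ p = 2 ^ p * ((2 ^ p)⁻¹) ^ l * ∑ x, f x ^ p := by
    intro l
    rw [mul_sum]
    apply sum_congr rfl
    intro x _
    simp only [hG]
    rw [Real.div_rpow (mul_nonneg (by norm_num) (hf x)) (by positivity), Real.mul_rpow (by norm_num) (hf x),
      Real.rpow_pow_comm (by norm_num) p l |>.symm, inv_pow]
    field_simp
  have hfp : 0 ≤ ∑ x, f x ^ p := sum_nonneg fun x _ => Real.rpow_nonneg (hf x) p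
  have hr1 : b / 2 ^ p < 1 := by rw [div_lt_one (by positivity)]; exact hbp
  have hr0 : 0 ≤ b / 2 ^ p := by positivity
  have hterm : ∀ l, ENNReal.ofReal (C * b ^ l) * ENNReal.ofReal (∑ x, G l x ^ p) =
      ENNReal.ofReal ((C * 2 ^ p * ∑ x, f x ^ p) * (b / 2 ^ p) ^ l) := by
    intro l
    rw [← ENNReal.ofReal_mul (by positivity), hGp, div_pow, inv_pow]
    congr 1; field_simp
  simp_rw [hterm] at hmain
  rw [← ENNReal.ofReal_tsum_of_nonneg (fun l => by positivity)
    ((summable_geometric_of_lt_one hr0 hr1).mul_left _), tsum_mul_left, tsum_geometric_of_lt_one hr0 hr1] at hmain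
  have h1 : 0 < 1 - b / 2 ^ p := by linarith
  rw [ENNReal.ofReal_le_ofReal_iff (by positivity)] at hmain
  linarith

theorem conv_le {m N : ℕ} (r : ℕ) (f : (Fin N → ZMod (m + 1)) → ℂ) (x : Fin N → ZMod (m + 1)) :
    ‖convC (sigmaC m N (r : ℤ)) f x‖ ≤ S m N r (fun y => ‖f y‖) x := by
  simp only [convC, S, sph, sigmaC, Nat.cast_inj]
  refine (norm_sum_le _ _).trans (le_of_eq ?_)
  rw [mul_sum, sum_filter]
  apply sum_congr rfl
  intro y _
  rw [norm_mul]
  split_ifs <;> simp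

theorem statement0 (m : ℕ) (hm : 2 ≤ m) (p : ℝ) (hp : 1 < p) :
    ∃ C : ℝ, 0 < C ∧ ∀ N : ℕ, 1 ≤ N → ∀ f : (Fin N → ZMod (m + 1)) → ℂ,
      (∑ x, sphericalMax m N f x ^ p) ^ (1 / p) ≤ C * (∑ x, ‖f x‖ ^ p) ^ (1 / p) := by
  classical
  obtain ⟨C, b, hC, hb, hbp, H⟩ := weaklevel p hp
  have hr1 : b / 2 ^ p < 1 := by rw [div_lt_one (by positivity)]; exact hbp
  have h1 : 0 < 1 - b / 2 ^ p := by linarith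
  refine ⟨(C * 2 ^ p * (1 - b / 2 ^ p)⁻¹) ^ (1 / p), by positivity, ?_⟩
  intro N hN f
  have hnn : ∀ x, 0 ≤ sphericalMax m N f x := by
    intro x
    refine le_trans (norm_nonneg _) (le_sup' (f := fun r : ℕ => ‖convC (sigmaC m N (r : ℤ)) f x‖)
      (b := 0) (by simp))
  have key := layer (sphericalMax m N f) (fun x => ‖f x‖) hnn (fun x => norm_nonneg _) p C b hp hC hb hbp (by
    intro lam hlam
    obtain ⟨L, hL⟩ := H m hm N hN (fun x => ‖f x‖) (fun x => norm_nonneg _) lam hlam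
    refine ⟨L, le_trans ?_ hL⟩
    have : (univ.filter (fun x => lam < sphericalMax m N f x)) ⊆
        univ.filter (fun x => ∃ r ≤ N, lam < S m N r (fun x => ‖f x‖) x) := by
      intro x hx
      rw [mem_filter] at hx ⊢
      refine ⟨mem_univ _, ?_⟩
      have hx2 := hx.2
      unfold sphericalMax at hx2
      rw [lt_sup'_iff] at hx2
      obtain ⟨r, hr, hlt⟩ := hx2
      exact ⟨r, by rw [mem_range] at hr; omega, hlt.trans_le (conv_le r f x)⟩
    exact_mod_cast card_le_card this)
  have hs : 0 ≤ ∑ x, ‖f x‖ ^ p := sum_nonneg fun x _ => Real.rpow_nonneg (norm_nonneg _) p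
  rw [← Real.mul_rpow (by positivity) hs]
  exact Real.rpow_le_rpow (sum_nonneg fun x _ => Real.rpow_nonneg (hnn x) p) key (by positivity)
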